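/- (Liouville theorem in dimensions n ≤ 4) Let 1 ≤ n ≤ 4, m ≥ 1, and let u = (u_1,…,u_m) be a bounded stable solution of the symmetric system (S) on ℝⁿ with ∂_j H_i(u(x)) ∂_i H_j(u(x)) > 0 for all i, j, x, where H_i(y) ≥ 0 for all y ∈ ℝᵐ and each i. Assume Φ satisfies Condition (A) or Condition (B), each u_i is of class C³, and each |∇u_i| ∈ L^∞(ℝⁿ) ∩ W^{1,2}_loc(ℝⁿ). Then each u_i is constant. -/

import Mathlib

open MeasureTheory Metric Finset Filter
open scoped RealInnerProductSpace

noncomputable section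

/-- Divergence of a vector field on Euclidean space. -/
def vdiv {n : ℕ} (F : EuclideanSpace ℝ (Fin n) → EuclideanSpace ℝ (Fin n))
    (x : EuclideanSpace ℝ (Fin n)) : ℝ :=
  ∑ i, fderiv ℝ F x (EuclideanSpace.single i 1) i

/-- The linearized coefficient matrix `A(η) = 2Φ''(|η|²) η ηᵀ + Φ'(|η|²) Id`,
acting on a vector `v`. -/
def Amul {n : ℕ} (Φ : ℝ → ℝ) (η v : EuclideanSpace ℝ (Fin n)) :
    EuclideanSpace ℝ (Fin n) :=
  (2 * deriv (deriv Φ) (‖η‖ ^ 2) * ⟪η, v⟫) • η + deriv Φ (‖η‖ ^ 2) • v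

/-- Condition (A) of Caffarelli–Garofalo–Segala (mean curvature type structure). -/
def ConditionA (n : ℕ) (Φ : ℝ → ℝ) : Prop :=
  ∃ ε C₁ C₂ : ℝ, 0 ≤ ε ∧ 0 < C₁ ∧ C₁ ≤ C₂ ∧
    ∀ η : EuclideanSpace ℝ (Fin n),
      (C₁ * (ε + ‖η‖)⁻¹ ≤ deriv Φ (‖η‖ ^ 2) ∧
        deriv Φ (‖η‖ ^ 2) ≤ C₂ * (ε + ‖η‖)⁻¹) ∧
      ∀ (ζ : EuclideanSpace ℝ (Fin n)) (zlast : ℝ), -⟪η, ζ⟫ + zlast = 0 →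
        C₁ * (ε + ‖η‖)⁻¹ * (‖ζ‖ ^ 2 + zlast ^ 2) ≤ ⟪Amul Φ η ζ, ζ⟫ ∧
        ⟪Amul Φ η ζ, ζ⟫ ≤ C₂ * (ε + ‖η‖)⁻¹ * (‖ζ‖ ^ 2 + zlast ^ 2)

/-- Condition (B) of Caffarelli–Garofalo–Segala (p-Laplacian type structure). -/
def ConditionB (n : ℕ) (Φ : ℝ → ℝ) : Prop :=
  ∃ p ε C₁ C₂ : ℝ, 1 < p ∧ 0 ≤ ε ∧ 0 < C₁ ∧ C₁ ≤ C₂ ∧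
    ∀ η ζ : EuclideanSpace ℝ (Fin n),
      (C₁ * (ε + ‖η‖) ^ (p - 2) ≤ deriv Φ (‖η‖ ^ 2) ∧
        deriv Φ (‖η‖ ^ 2) ≤ C₂ * (ε + ‖η‖) ^ (p - 2)) ∧
      (C₁ * (ε + ‖η‖) ^ (p - 2) * ‖ζ‖ ^ 2 ≤ ⟪Amul Φ η ζ, ζ⟫ ∧
        ⟪Amul Φ η ζ, ζ⟫ ≤ C₂ * (ε + ‖η‖) ^ (p - 2) * ‖ζ‖ ^ 2)

open scoped Gradient ContDiff

local notation "𝔼" n:max => EuclideanSpace ℝ (Fin n)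

/-!
For a direction `e`, both `∂ₑuᵢ` and the stability witness `φᵢ` solve the linearized system, so
testing with multiples of `ζ²`, `ζ` a cutoff, gives a Picone identity for `σᵢ = ∂ₑuᵢ / φᵢ`: the
energies `φᵢ² ⟪A(∇uᵢ)∇σᵢ, ∇σᵢ⟫` are controlled by a cutoff error plus
`∑ ∂ⱼHᵢ φᵢ φⱼ (σᵢσⱼ - σᵢ²)`, which by symmetry is `-½ ∑ ∂ⱼHᵢ φᵢ φⱼ (σᵢ - σⱼ)² ≤ 0`.

Since `Hᵢ ≥ 0`, testing the equation with `(M - uᵢ)ζ²` shows that `∫ Φ'(|∇uᵢ|²)|∇uᵢ|²` over the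
ball of radius `R` grows at most like `R^(n-2)`. The cutoff error is therefore at most of order
`R^(n-4)`, hence bounded for `n ≤ 4`, and hole filling makes the energies vanish. So
`∇σᵢ = 0` wherever `∇uᵢ ≠ 0`; as `σᵢ = 0` elsewhere, `σᵢ³` and hence `σᵢ` is constant. This holds
for every `e`, that is, `∇uᵢ = φᵢ c` for a fixed vector `c`. Finally
`div (Φ'(|∇uᵢ|²)∇uᵢ) ≤ 0` makes `Φ'(|∇uᵢ|²)φᵢ` nonincreasing along `c`, and a bounded `uᵢ`
forces `c = 0`.
-/

/-! ### Gradients and mixed second derivatives -/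

section Gradient

variable {E : Type*} [NormedAddCommGroup E]

theorem fderiv_fderiv_apply [NormedSpace ℝ E] {f : E → ℝ} (hf : ContDiff ℝ 2 f) (x v w : E) :
    fderiv ℝ (fun y => fderiv ℝ f y v) x w = fderiv ℝ (fderiv ℝ f) x w v := by
  have hdf : DifferentiableAt ℝ (fderiv ℝ f) x :=
    (hf.fderiv_right (m := 1) (by norm_num)).differentiable one_ne_zero x
  simp [fderiv_clm_apply hdf (differentiableAt_const _)]

theorem fderiv_fderiv_apply_comm [NormedSpace ℝ E] {f : E → ℝ} (hf : ContDiff ℝ 2 f) (x v w : E) :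
    fderiv ℝ (fun y => fderiv ℝ f y v) x w = fderiv ℝ (fun y => fderiv ℝ f y w) x v := by
  have hsymm : IsSymmSndFDerivAt ℝ f x := hf.contDiffAt.isSymmSndFDerivAt (by simp)
  rw [fderiv_fderiv_apply hf, fderiv_fderiv_apply hf, hsymm w v]

theorem eq_of_eq_zero_or_fderiv_eq_zero [NormedSpace ℝ E] {f : E → ℝ} (hf : Differentiable ℝ f)
    (h : ∀ x, f x = 0 ∨ fderiv ℝ f x = 0) (x y : E) : f x = f y := by
  have hcrit : ∀ z, fderiv ℝ (fun z => f z ^ 3) z = 0 := fun z => by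
    rw [fderiv_fun_pow 3 (hf z)]
    rcases h z with hz | hz <;> simp [hz]
  exact (Odd.strictMono_pow (by decide)).injective
    (is_const_of_fderiv_eq_zero (hf.fun_pow 3) hcrit x y)

variable [InnerProductSpace ℝ E] [CompleteSpace E] {f g : E → ℝ}

theorem norm_gradient (f : E → ℝ) (x : E) : ‖∇ f x‖ = ‖fderiv ℝ f x‖ := by
  simp [gradient]

theorem fderiv_apply_eq_inner_gradient (f : E → ℝ) (x v : E) : fderiv ℝ f x v = ⟪v, ∇ f x⟫ := by
  rw [real_inner_comm, inner_gradient_left]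

theorem contDiff_gradient {k : ℕ∞ω} (hf : ContDiff ℝ (k + 1) f) : ContDiff ℝ k (∇ f) :=
  (InnerProductSpace.toDual ℝ E).symm.contDiff.comp (hf.fderiv_right le_rfl)

theorem gradient_mul {x : E} (hf : DifferentiableAt ℝ f x) (hg : DifferentiableAt ℝ g x) :
    ∇ (fun y => f y * g y) x = f x • ∇ g x + g x • ∇ f x := by
  simp [gradient, fderiv_fun_mul hf hg]

theorem gradient_sq {x : E} (hf : DifferentiableAt ℝ f x) :
    ∇ (fun y => f y ^ 2) x = (2 * f x) • ∇ f x := by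
  simp only [sq, gradient_mul hf hf]
  module

theorem fderiv_gradient_apply (hf : ContDiff ℝ 2 f) (x e : E) :
    fderiv ℝ (∇ f) x e = ∇ (fun y => fderiv ℝ f y e) x := by
  have hdf : DifferentiableAt ℝ (∇ f) x :=
    (contDiff_gradient (k := 1) hf).differentiable one_ne_zero x
  refine ext_inner_right ℝ fun v => ?_
  calc ⟪fderiv ℝ (∇ f) x e, v⟫
      = fderiv ℝ (fun y => ⟪∇ f y, v⟫) x e := by
        rw [fderiv_inner_apply ℝ hdf (differentiableAt_const v)]
        simp
    _ = fderiv ℝ (fun y => fderiv ℝ f y e) x v := by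
        simp only [inner_gradient_left]
        exact fderiv_fderiv_apply_comm hf x v e
    _ = ⟪∇ (fun y => fderiv ℝ f y e) x, v⟫ := (inner_gradient_left ..).symm

end Gradient

/-! ### The divergence theorem for compactly supported fields -/

theorem integral_sum_fderiv_single_eq_zero {k : ℕ} {f : (Fin (k + 1) → ℝ) → Fin (k + 1) → ℝ}
    (hf : Differentiable ℝ f) (hsupp : HasCompactSupport f)
    (hint : Integrable fun x => ∑ i, fderiv ℝ f x (Pi.single i 1) i) :
    ∫ x, ∑ i, fderiv ℝ f x (Pi.single i 1) i = 0 := by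
  obtain ⟨R, hR, hsuppR⟩ := hsupp.isCompact.isBounded.subset_ball_lt 0 0
  have hface : ∀ (i : Fin (k + 1)) (x : Fin k → ℝ) (s : ℝ), |s| = R → f (i.insertNth s x) = 0 := by
    refine fun i x s hs => image_eq_zero_of_notMem_tsupport fun hmem => ?_
    have hlt := mem_ball_zero_iff.1 (hsuppR hmem)
    have hle := norm_le_pi_norm (i.insertNth s x : Fin (k + 1) → ℝ) i
    simp only [Fin.insertNth_apply_same, Real.norm_eq_abs, hs] at hle
    exact hle.not_gt hlt
  have hbox : ∀ x ∉ Set.Icc (fun _ : Fin (k + 1) => -R) (fun _ => R),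
      ∑ i, fderiv ℝ f x (Pi.single i 1) i = 0 := by
    refine fun x hx => Finset.sum_eq_zero fun i _ => ?_
    rw [fderiv_of_notMem_tsupport (𝕜 := ℝ) fun hmem => hx ?_]
    · simp
    · have hlt := mem_ball_zero_iff.1 (hsuppR hmem)
      have hcoord : ∀ j, |x j| ≤ R := fun j => (norm_le_pi_norm x j).trans hlt.le
      exact ⟨fun j => (abs_le.1 (hcoord j)).1, fun j => (abs_le.1 (hcoord j)).2⟩
  rw [← setIntegral_eq_integral_of_forall_compl_eq_zero hbox,
    integral_divergence_of_hasFDerivAt_off_countable (fun _ => -R) (fun _ => R)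
      (fun _ => by linarith) f (fderiv ℝ f) ∅ Set.countable_empty hf.continuous.continuousOn
      (fun x _ => (hf x).hasFDerivAt) hint.integrableOn]
  simp [hface _ _ R (abs_of_pos hR), hface _ _ (-R) (by simp [abs_of_pos hR])]

section Divergence

variable {n : ℕ} {F : 𝔼 n → 𝔼 n} {ψ : 𝔼 n → ℝ}

theorem vdiv_eq_zero_of_fderiv_eq_zero {x : 𝔼 n} (h : fderiv ℝ F x = 0) : vdiv F x = 0 := by
  simp [vdiv, h]

theorem continuous_vdiv (hF : ContDiff ℝ 1 F) : Continuous (vdiv F) := by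
  have := hF.continuous_fderiv one_ne_zero
  unfold vdiv
  fun_prop

theorem vdiv_smul {x : 𝔼 n} (hF : DifferentiableAt ℝ F x) (hψ : DifferentiableAt ℝ ψ x) :
    vdiv (fun y => ψ y • F y) x = ψ x * vdiv F x + fderiv ℝ ψ x (F x) := by
  have hexpand : F x = ∑ i, F x i • EuclideanSpace.single i (1 : ℝ) := by
    simpa using ((EuclideanSpace.basisFun (Fin n) ℝ).sum_repr (F x)).symm
  have hdψ : fderiv ℝ ψ x (F x) = ∑ i, fderiv ℝ ψ x (EuclideanSpace.single i 1) * F x i := by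
    conv_lhs => rw [hexpand]
    simp [mul_comm]
  simp [vdiv, fderiv_fun_smul hψ hF, hdψ, Finset.sum_add_distrib, Finset.mul_sum]

theorem integral_vdiv_eq_zero (hF : Differentiable ℝ F) (hsupp : HasCompactSupport F)
    (hint : Integrable (vdiv F)) : ∫ x, vdiv F x = 0 := by
  obtain _ | k := n
  · simp [vdiv]
  let e := PiLp.continuousLinearEquiv 2 ℝ fun _ : Fin (k + 1) => ℝ
  let f : (Fin (k + 1) → ℝ) → Fin (k + 1) → ℝ := e ∘ F ∘ e.symm
  have hf : Differentiable ℝ f := e.differentiable.comp (hF.comp e.symm.differentiable)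
  have hfsupp : HasCompactSupport f :=
    (hsupp.comp_homeomorph e.symm.toHomeomorph).comp_left (map_zero e)
  have hdiv : ∀ y, vdiv F (e.symm y) = ∑ i, fderiv ℝ f y (Pi.single i 1) i := fun y => by
    have hdf : HasFDerivAt f ((e : 𝔼 (k + 1) →L[ℝ] _) ∘L fderiv ℝ F (e.symm y) ∘L
        (e.symm : _ →L[ℝ] 𝔼 (k + 1))) y :=
      e.hasFDerivAt.comp y ((hF _).hasFDerivAt.comp y e.symm.hasFDerivAt)
    rw [hdf.fderiv]
    rfl
  have hmp : MeasurePreserving e.symm := PiLp.volume_preserving_toLp (Fin (k + 1))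
  have hme : MeasurableEmbedding e.symm :=
    (MeasurableEquiv.toLp 2 (Fin (k + 1) → ℝ)).measurableEmbedding
  rw [← hmp.integral_comp hme]
  simp only [hdiv]
  refine integral_sum_fderiv_single_eq_zero hf hfsupp ?_
  simpa only [Function.comp_def, hdiv] using (hmp.integrable_comp_emb hme).2 hint

theorem hasCompactSupport_fderiv_apply (hψ : HasCompactSupport ψ) (F : 𝔼 n → 𝔼 n) :
    HasCompactSupport fun x => fderiv ℝ ψ x (F x) :=
  (hψ.fderiv ℝ).mono fun x hx h => hx (by simp [h])

theorem integrable_fderiv_apply (hψ : ContDiff ℝ 1 ψ) (hsupp : HasCompactSupport ψ)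
    (hF : Continuous F) : Integrable fun x => fderiv ℝ ψ x (F x) :=
  ((hψ.continuous_fderiv one_ne_zero).clm_apply hF).integrable_of_hasCompactSupport
    (hasCompactSupport_fderiv_apply hsupp F)

theorem integral_fderiv_apply_eq_neg_integral_mul_vdiv (hF : Differentiable ℝ F)
    (hdiv : Continuous (vdiv F)) (hψ : ContDiff ℝ 1 ψ) (hsupp : HasCompactSupport ψ) :
    ∫ x, fderiv ℝ ψ x (F x) = -∫ x, ψ x * vdiv F x := by
  have hψd : Differentiable ℝ ψ := hψ.differentiable one_ne_zero
  have hprod : vdiv (fun y => ψ y • F y) = fun x => ψ x * vdiv F x + fderiv ℝ ψ x (F x) :=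
    funext fun x => vdiv_smul (hF x) (hψd x)
  have hint₁ : Integrable fun x => ψ x * vdiv F x :=
    (hψ.continuous.mul hdiv).integrable_of_hasCompactSupport hsupp.mul_right
  have hint₂ : Integrable fun x => fderiv ℝ ψ x (F x) :=
    integrable_fderiv_apply hψ hsupp hF.continuous
  have hzero := integral_vdiv_eq_zero (hψd.smul hF) hsupp.smul_right (hprod ▸ hint₁.add hint₂)
  rw [show vdiv (ψ • F) = _ from hprod, integral_add hint₁ hint₂] at hzero
  linarith

-- Moving `e` onto `ψ`, using `∫ ψ * vdiv F = -∫ dψ(F)` for `∂ₑψ`, and moving `e` back.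
theorem integral_fderiv_apply_fderiv_eq_neg_integral_mul_fderiv_vdiv (hF : ContDiff ℝ 1 F)
    (hdiv : ContDiff ℝ 1 (vdiv F)) (hψ : ContDiff ℝ 2 ψ) (hsupp : HasCompactSupport ψ) (e : 𝔼 n) :
    ∫ x, fderiv ℝ ψ x (fderiv ℝ F x e) = -∫ x, ψ x * fderiv ℝ (vdiv F) x e := by
  have hdψ : ContDiff ℝ 1 (fderiv ℝ ψ) := hψ.fderiv_right (by norm_num)
  have hdψe : ContDiff ℝ 1 fun x => fderiv ℝ ψ x e := hdψ.clm_apply contDiff_const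
  have hdψe_supp : HasCompactSupport fun x => fderiv ℝ ψ x e :=
    hasCompactSupport_fderiv_apply hsupp fun _ => e
  have hdF : Continuous fun x => fderiv ℝ F x e :=
    (hF.continuous_fderiv one_ne_zero).clm_apply continuous_const
  have hddiv : Continuous fun x => fderiv ℝ (vdiv F) x e :=
    (hdiv.continuous_fderiv one_ne_zero).clm_apply continuous_const
  have hdFψ : ∀ x, fderiv ℝ (fderiv ℝ ψ) x e (F x)
      = fderiv ℝ (fun y => fderiv ℝ ψ y e) x (F x) := fun x => by
    rw [fderiv_fderiv_apply_comm hψ, fderiv_fderiv_apply hψ]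
  have hmove := integral_bilinear_fderiv_right_eq_neg_left_of_integrable
    (μ := volume) (f := fderiv ℝ ψ) (g := F) (v := e) (B := ContinuousLinearMap.id ℝ (𝔼 n →L[ℝ] ℝ))
    (by
      simp only [ContinuousLinearMap.id_apply, hdFψ]
      exact integrable_fderiv_apply hdψe hdψe_supp hF.continuous)
    (integrable_fderiv_apply (hψ.of_le one_le_two) hsupp hdF)
    (integrable_fderiv_apply (hψ.of_le one_le_two) hsupp hF.continuous)
    (fun x _ => hdψ.differentiable one_ne_zero x) (fun x _ => hF.differentiable one_ne_zero x)
  have hback := integral_mul_fderiv_eq_neg_fderiv_mul_of_integrable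
    (μ := volume) (f := ψ) (g := vdiv F) (v := e)
    ((hdψe.continuous.mul hdiv.continuous).integrable_of_hasCompactSupport hdψe_supp.mul_right)
    ((hψ.continuous.mul hddiv).integrable_of_hasCompactSupport hsupp.mul_right)
    ((hψ.continuous.mul hdiv.continuous).integrable_of_hasCompactSupport hsupp.mul_right)
    (fun x _ => hψ.differentiable two_ne_zero x) (fun x _ => hdiv.differentiable one_ne_zero x)
  have hmid := integral_fderiv_apply_eq_neg_integral_mul_vdiv (hF.differentiable one_ne_zero)
    hdiv.continuous hdψe hdψe_supp
  simp only [ContinuousLinearMap.id_apply, hdFψ] at hmove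
  rw [hmove, hmid, hback]

end Divergence

/-! ### The flux and its linearization -/

section Flux

variable {n : ℕ} {Φ : ℝ → ℝ} {u v : 𝔼 n → ℝ}

/-- The flux `Φ'(|∇u|²)∇u` of the quasilinear operator `u ↦ div (Φ'(|∇u|²)∇u)`. -/
def flux (Φ : ℝ → ℝ) (u : 𝔼 n → ℝ) (x : 𝔼 n) : 𝔼 n :=
  deriv Φ (‖∇ u x‖ ^ 2) • ∇ u x

/-- The flux `A(∇u)∇v` of the linearization at `u` of the quasilinear operator. -/
def linFlux (Φ : ℝ → ℝ) (u v : 𝔼 n → ℝ) (x : 𝔼 n) : 𝔼 n :=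
  Amul Φ (∇ u x) (∇ v x)

theorem contDiff_deriv_norm_gradient_sq (hΦ : ContDiff ℝ 2 Φ) (hu : ContDiff ℝ 2 u) :
    ContDiff ℝ 1 fun x => deriv Φ (‖∇ u x‖ ^ 2) := by
  have hΦ' : ContDiff ℝ 1 (deriv Φ) := ContDiff.deriv' hΦ
  exact hΦ'.comp ((contDiff_gradient (k := 1) hu).norm_sq ℝ)

theorem contDiff_flux (hΦ : ContDiff ℝ 2 Φ) (hu : ContDiff ℝ 2 u) : ContDiff ℝ 1 (flux Φ u) :=
  (contDiff_deriv_norm_gradient_sq hΦ hu).smul (contDiff_gradient hu)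

theorem continuous_linFlux (hΦ : ContDiff ℝ 2 Φ) (hu : ContDiff ℝ 1 u) (hv : ContDiff ℝ 1 v) :
    Continuous (linFlux Φ u v) := by
  have hΦ' : ContDiff ℝ 1 (deriv Φ) := ContDiff.deriv' hΦ
  have hΦ'c : Continuous (deriv Φ) := hΦ'.continuous
  have : Continuous (deriv (deriv Φ)) := hΦ'.continuous_deriv le_rfl
  have hdu : Continuous (∇ u) := (contDiff_gradient (k := 0) (by simpa using hu)).continuous
  have hdv : Continuous (∇ v) := (contDiff_gradient (k := 0) (by simpa using hv)).continuous
  unfold linFlux Amul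
  fun_prop

theorem fderiv_flux_apply (hΦ : ContDiff ℝ 2 Φ) (hu : ContDiff ℝ 2 u) (x e : 𝔼 n) :
    fderiv ℝ (flux Φ u) x e = linFlux Φ u (fun y => fderiv ℝ u y e) x := by
  have hΦ' : HasDerivAt (deriv Φ) (deriv (deriv Φ) (‖∇ u x‖ ^ 2)) (‖∇ u x‖ ^ 2) :=
    ((ContDiff.deriv' (n := 1) hΦ).differentiable one_ne_zero _).hasDerivAt
  have hdu : HasFDerivAt (∇ u) (fderiv ℝ (∇ u) x) x :=
    ((contDiff_gradient (k := 1) hu).differentiable one_ne_zero x).hasFDerivAt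
  have hflux := (hΦ'.comp_hasFDerivAt x hdu.norm_sq).smul hdu
  rw [show flux Φ u = (deriv Φ ∘ fun y => ‖∇ u y‖ ^ 2) • ∇ u from rfl,
    hflux.fderiv, linFlux, ← fderiv_gradient_apply hu]
  simp [Amul, add_comm, mul_assoc, mul_left_comm]

/-- Regularity of a component `u` of a solution and of the corresponding component `φ` of a
nowhere vanishing solution of the linearized system: what is needed to multiply both equations by
compactly supported functions and integrate. The field `linFlux Φ u φ` need not be `C¹`. -/
structure RegularPair (Φ : ℝ → ℝ) (u φ : 𝔼 n → ℝ) : Prop where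
  contDiff_left : ContDiff ℝ 3 u
  contDiff_vdiv_flux : ContDiff ℝ 1 (vdiv (flux Φ u))
  contDiff_right : ContDiff ℝ 2 φ
  ne_zero : ∀ x, φ x ≠ 0
  differentiable_linFlux : Differentiable ℝ (linFlux Φ u φ)
  continuous_vdiv_linFlux : Continuous (vdiv (linFlux Φ u φ))

end Flux

/-! ### The coefficient matrix -/

section Coefficients

variable {n : ℕ} {Φ : ℝ → ℝ} {η v w : 𝔼 n}

theorem inner_amul (Φ : ℝ → ℝ) (η v w : 𝔼 n) :
    ⟪Amul Φ η v, w⟫ = 2 * deriv (deriv Φ) (‖η‖ ^ 2) * ⟪η, v⟫ * ⟪η, w⟫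
      + deriv Φ (‖η‖ ^ 2) * ⟪v, w⟫ := by
  simp only [Amul, inner_add_left, real_inner_smul_left]

theorem inner_amul_comm (Φ : ℝ → ℝ) (η v w : 𝔼 n) : ⟪Amul Φ η v, w⟫ = ⟪Amul Φ η w, v⟫ := by
  rw [inner_amul, inner_amul, real_inner_comm v w]
  ring

theorem amul_add (Φ : ℝ → ℝ) (η v w : 𝔼 n) : Amul Φ η (v + w) = Amul Φ η v + Amul Φ η w := by
  simp only [Amul, inner_add_right]
  module

theorem amul_smul (Φ : ℝ → ℝ) (η v : 𝔼 n) (c : ℝ) : Amul Φ η (c • v) = c • Amul Φ η v := by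
  simp only [Amul, real_inner_smul_right]
  module

/-- The structural hypotheses on `Φ` making `v ↦ ⟪A(η)v, v⟫` positive definite for `η ≠ 0`. -/
structure IsElliptic (Φ : ℝ → ℝ) : Prop where
  contDiff : ContDiff ℝ 2 Φ
  deriv_pos : ∀ s, 0 < s → 0 < deriv Φ s
  deriv_add_pos : ∀ s, 0 < s → 0 < deriv Φ s + 2 * s * deriv (deriv Φ) s

namespace IsElliptic

theorem deriv_nonneg (hΦ : IsElliptic Φ) {s : ℝ} (hs : 0 ≤ s) : 0 ≤ deriv Φ s := by
  have hcont : Continuous (deriv Φ) := hΦ.contDiff.continuous_deriv (by norm_num)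
  have hsub : Set.Ici (0 : ℝ) ⊆ {s | 0 ≤ deriv Φ s} := by
    rw [← closure_Ioi]
    exact closure_minimal (fun s hs => (hΦ.deriv_pos s hs).le) (isClosed_le continuous_const hcont)
  exact hsub hs

-- With `c = ⟪η, v⟫² / |η|² ∈ [0, |v|²]` the form is `(Φ' + 2|η|²Φ'') c + Φ' (|v|² - c)`.
theorem inner_amul_pos (hΦ : IsElliptic Φ) (hη : η ≠ 0) (hv : v ≠ 0) : 0 < ⟪Amul Φ η v, v⟫ := by
  have hη2 : 0 < ‖η‖ ^ 2 := by positivity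
  have hv2 : 0 < ‖v‖ ^ 2 := by positivity
  have hpos := hΦ.deriv_pos _ hη2
  have hell := hΦ.deriv_add_pos _ hη2
  obtain ⟨c, hc⟩ : ∃ c, ⟪η, v⟫ ^ 2 = ‖η‖ ^ 2 * c := ⟨_, (mul_div_cancel₀ _ hη2.ne').symm⟩
  have hc0 : 0 ≤ c := nonneg_of_mul_nonneg_right (hc ▸ sq_nonneg _) hη2
  have hcv : c ≤ ‖v‖ ^ 2 := by
    refine le_of_mul_le_mul_left ?_ hη2
    rw [← hc, ← mul_pow]
    exact sq_le_sq' (neg_le_of_abs_le (abs_real_inner_le_norm η v)) (real_inner_le_norm η v)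
  have hform : ⟪Amul Φ η v, v⟫
      = (deriv Φ (‖η‖ ^ 2) + 2 * ‖η‖ ^ 2 * deriv (deriv Φ) (‖η‖ ^ 2)) * c
        + deriv Φ (‖η‖ ^ 2) * (‖v‖ ^ 2 - c) := by
    rw [inner_amul, real_inner_self_eq_norm_sq]
    linear_combination 2 * deriv (deriv Φ) (‖η‖ ^ 2) * hc
  rw [hform]
  rcases hcv.lt_or_eq with hlt | rfl
  · have := sub_pos.2 hlt
    positivity
  · simpa using mul_pos hell hv2

theorem inner_amul_nonneg (hΦ : IsElliptic Φ) (η v : 𝔼 n) : 0 ≤ ⟪Amul Φ η v, v⟫ := by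
  rcases eq_or_ne η 0 with rfl | hη
  · have := hΦ.deriv_nonneg (s := ‖(0 : 𝔼 n)‖ ^ 2) (by positivity)
    simpa [inner_amul] using mul_nonneg this (real_inner_self_nonneg (x := v))
  rcases eq_or_ne v 0 with rfl | hv
  · simp
  · exact (hΦ.inner_amul_pos hη hv).le

end IsElliptic

/-- The common consequence of Conditions (A) and (B): on bounded sets of `η`, the quadratic form
of `A(η)` is dominated by a multiple of `Φ'(|η|²)`. -/
def LocallyDominated (n : ℕ) (Φ : ℝ → ℝ) : Prop :=
  ∀ G : ℝ, ∃ Λ, ∀ η : 𝔼 n, ‖η‖ ≤ G → ∀ v,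
    ⟪Amul Φ η v, v⟫ ≤ Λ * deriv Φ (‖η‖ ^ 2) * ‖v‖ ^ 2

theorem ConditionA.locallyDominated (h : ConditionA n Φ) : LocallyDominated n Φ := by
  obtain ⟨ε, C₁, C₂, hε, hC₁, hC, hA⟩ := h
  refine fun G => ⟨C₂ / C₁ * (1 + G ^ 2), fun η hη v => ?_⟩
  obtain ⟨⟨hlower, -⟩, hform⟩ := hA η
  have hweight : (ε + ‖η‖)⁻¹ ≤ deriv Φ (‖η‖ ^ 2) / C₁ := by rwa [le_div_iff₀' hC₁]
  have hinner : ⟪η, v⟫ ^ 2 ≤ G ^ 2 * ‖v‖ ^ 2 := by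
    rw [← mul_pow, ← sq_abs]
    gcongr
    exact (abs_real_inner_le_norm η v).trans (by gcongr)
  have hC₂ : 0 ≤ C₂ := hC₁.le.trans hC
  have hquot : 0 ≤ deriv Φ (‖η‖ ^ 2) / C₁ := le_trans (by positivity) hweight
  calc ⟪Amul Φ η v, v⟫
      ≤ C₂ * (ε + ‖η‖)⁻¹ * (‖v‖ ^ 2 + ⟪η, v⟫ ^ 2) := (hform v ⟪η, v⟫ (by ring)).2
    _ ≤ C₂ * (deriv Φ (‖η‖ ^ 2) / C₁) * (‖v‖ ^ 2 + G ^ 2 * ‖v‖ ^ 2) := by gcongr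
    _ = C₂ / C₁ * (1 + G ^ 2) * deriv Φ (‖η‖ ^ 2) * ‖v‖ ^ 2 := by ring

theorem ConditionB.locallyDominated (h : ConditionB n Φ) : LocallyDominated n Φ := by
  obtain ⟨p, ε, C₁, C₂, -, hε, hC₁, hC, hB⟩ := h
  refine fun G => ⟨C₂ / C₁, fun η _ v => ?_⟩
  obtain ⟨⟨hlower, -⟩, -, hform⟩ := hB η v
  have hweight : (ε + ‖η‖) ^ (p - 2) ≤ deriv Φ (‖η‖ ^ 2) / C₁ := by rwa [le_div_iff₀' hC₁]
  have hC₂ : 0 ≤ C₂ := hC₁.le.trans hC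
  calc ⟪Amul Φ η v, v⟫
      ≤ C₂ * (ε + ‖η‖) ^ (p - 2) * ‖v‖ ^ 2 := hform
    _ ≤ C₂ * (deriv Φ (‖η‖ ^ 2) / C₁) * ‖v‖ ^ 2 := by gcongr
    _ = C₂ / C₁ * deriv Φ (‖η‖ ^ 2) * ‖v‖ ^ 2 := by ring

end Coefficients

/-! ### Picone's identity -/

section Picone

variable {n : ℕ} {Φ : ℝ → ℝ} {u φ ζ : 𝔼 n → ℝ} {e x : 𝔼 n}

/-- The quotient `σ = ∂ₑu / φ` of the two solutions `∂ₑu` and `φ` of the linearized equation. -/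
def derivQuotient (u φ : 𝔼 n → ℝ) (e x : 𝔼 n) : ℝ :=
  fderiv ℝ u x e / φ x

/-- The density `φ² ⟪A(∇u)∇σ, ∇σ⟫`, with `σ = derivQuotient u φ e`. -/
def piconeDensity (Φ : ℝ → ℝ) (u φ : 𝔼 n → ℝ) (e x : 𝔼 n) : ℝ :=
  φ x ^ 2 * ⟪linFlux Φ u (derivQuotient u φ e) x, ∇ (derivQuotient u φ e) x⟫

/-- The cross term `2 ∂ₑu φ ζ ⟪A(∇u)∇σ, ∇ζ⟫` created by a cutoff `ζ`. -/
def piconeCross (Φ : ℝ → ℝ) (u φ : 𝔼 n → ℝ) (e : 𝔼 n) (ζ : 𝔼 n → ℝ) (x : 𝔼 n) : ℝ :=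
  2 * fderiv ℝ u x e * φ x * ζ x * ⟪linFlux Φ u (derivQuotient u φ e) x, ∇ ζ x⟫

/-- The error term `(∂ₑu)² ⟪A(∇u)∇ζ, ∇ζ⟫` created by a cutoff `ζ`. -/
def piconeError (Φ : ℝ → ℝ) (u : 𝔼 n → ℝ) (e : 𝔼 n) (ζ : 𝔼 n → ℝ) (x : 𝔼 n) : ℝ :=
  fderiv ℝ u x e ^ 2 * ⟪linFlux Φ u ζ x, ∇ ζ x⟫

/-- The failure `σ (∂ₑu div (A(∇u)∇φ) - φ ∂ₑ div (Φ'(|∇u|²)∇u))` of `∂ₑu` and `φ` to solve the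
same linear equation, weighted by `σ = derivQuotient u φ e`. -/
def piconeDefect (Φ : ℝ → ℝ) (u φ : 𝔼 n → ℝ) (e x : 𝔼 n) : ℝ :=
  derivQuotient u φ e x *
    (fderiv ℝ u x e * vdiv (linFlux Φ u φ) x - φ x * fderiv ℝ (vdiv (flux Φ u)) x e)

-- Substituting `p = ∇φ`, `q = ∇σ`, `z = ∇ζ`, the vector `σ • p + φ • q` is `∇(σφ)`.
theorem inner_amul_picone (Φ : ℝ → ℝ) (η p q z : 𝔼 n) (σ φ ζ : ℝ) :
    ⟪Amul Φ η (σ • p + φ • q), ζ ^ 2 • (σ • p + φ • q) + (2 * (σ * φ) * ζ) • z⟫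
      - ⟪Amul Φ η p,
          σ • (ζ ^ 2 • (σ • p + φ • q) + (2 * (σ * φ) * ζ) • z) + (σ * φ * ζ ^ 2) • q⟫
      = ζ ^ 2 * (φ ^ 2 * ⟪Amul Φ η q, q⟫) + 2 * (σ * φ) * φ * ζ * ⟪Amul Φ η q, z⟫ := by
  simp only [amul_add, amul_smul, inner_add_left, inner_add_right, real_inner_smul_left,
    real_inner_smul_right]
  rw [inner_amul_comm Φ η p q]
  ring

theorem continuous_piconeError (hΦ : ContDiff ℝ 2 Φ) (hu : ContDiff ℝ 1 u)
    (hζ : ContDiff ℝ 2 ζ) (e : 𝔼 n) : Continuous (piconeError Φ u e ζ) :=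
  (((hu.continuous_fderiv one_ne_zero).clm_apply continuous_const).pow 2).mul
    ((continuous_linFlux hΦ hu (hζ.of_le (by norm_num))).inner
      (contDiff_gradient (k := 1) hζ).continuous)

namespace RegularPair

theorem contDiff_fderiv_apply (h : RegularPair Φ u φ) (e : 𝔼 n) :
    ContDiff ℝ 2 fun x => fderiv ℝ u x e :=
  (h.contDiff_left.fderiv_right (by norm_num)).clm_apply contDiff_const

theorem contDiff_derivQuotient (h : RegularPair Φ u φ) (e : 𝔼 n) :
    ContDiff ℝ 2 (derivQuotient u φ e) :=
  (h.contDiff_fderiv_apply e).div h.contDiff_right h.ne_zero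

theorem derivQuotient_mul (h : RegularPair Φ u φ) :
    derivQuotient u φ e x * φ x = fderiv ℝ u x e :=
  div_mul_cancel₀ _ (h.ne_zero x)

theorem continuous_piconeDensity (h : RegularPair Φ u φ) (hΦ : ContDiff ℝ 2 Φ) (e : 𝔼 n) :
    Continuous (piconeDensity Φ u φ e) := by
  have hσ : ContDiff ℝ 2 (derivQuotient u φ e) := h.contDiff_derivQuotient e
  exact (h.contDiff_right.continuous.pow 2).mul ((continuous_linFlux hΦ
    (h.contDiff_left.of_le (by norm_num)) (hσ.of_le (by norm_num))).inner
      (contDiff_gradient (k := 1) hσ).continuous)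

theorem continuous_piconeCross (h : RegularPair Φ u φ) (hΦ : ContDiff ℝ 2 Φ) (e : 𝔼 n)
    (hζ : ContDiff ℝ 2 ζ) : Continuous (piconeCross Φ u φ e ζ) := by
  have hσ : Continuous (linFlux Φ u (derivQuotient u φ e)) := continuous_linFlux hΦ
    (h.contDiff_left.of_le (by norm_num)) ((h.contDiff_derivQuotient e).of_le (by norm_num))
  exact (((continuous_const.mul (h.contDiff_fderiv_apply e).continuous).mul
    h.contDiff_right.continuous).mul hζ.continuous).mul
      (hσ.inner (contDiff_gradient (k := 1) hζ).continuous)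

theorem continuous_piconeDefect (h : RegularPair Φ u φ) (e : 𝔼 n) :
    Continuous (piconeDefect Φ u φ e) :=
  (h.contDiff_derivQuotient e).continuous.mul
    (((h.contDiff_fderiv_apply e).continuous.mul h.continuous_vdiv_linFlux).sub
      (h.contDiff_right.continuous.mul
        ((h.contDiff_vdiv_flux.continuous_fderiv one_ne_zero).clm_apply continuous_const)))

-- The two test functions are `∂ₑu ζ²` for the differentiated equation and `σ ∂ₑu ζ²` for the
-- linearized one.
theorem picone_identity (h : RegularPair Φ u φ) (hζ : ContDiff ℝ 2 ζ) (e x : 𝔼 n) :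
    fderiv ℝ (fun y => fderiv ℝ u y e * ζ y ^ 2) x (linFlux Φ u (fun y => fderiv ℝ u y e) x)
      - fderiv ℝ (fun y => derivQuotient u φ e y * (fderiv ℝ u y e * ζ y ^ 2)) x (linFlux Φ u φ x)
      = ζ x ^ 2 * piconeDensity Φ u φ e x + piconeCross Φ u φ e ζ x := by
  have hφ : DifferentiableAt ℝ φ x := h.contDiff_right.differentiable two_ne_zero x
  have hσ : DifferentiableAt ℝ (derivQuotient u φ e) x :=
    (h.contDiff_derivQuotient e).differentiable two_ne_zero x
  have hw : DifferentiableAt ℝ (fun y => fderiv ℝ u y e) x :=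
    (h.contDiff_fderiv_apply e).differentiable two_ne_zero x
  have hζd : DifferentiableAt ℝ ζ x := hζ.differentiable two_ne_zero x
  have hgw : ∇ (fun y => fderiv ℝ u y e) x
      = derivQuotient u φ e x • ∇ φ x + φ x • ∇ (derivQuotient u φ e) x := by
    rw [← gradient_mul hσ hφ]
    simp only [h.derivQuotient_mul]
  have hgtest : ∇ (fun y => fderiv ℝ u y e * ζ y ^ 2) x
      = ζ x ^ 2 • ∇ (fun y => fderiv ℝ u y e) x
        + (2 * (derivQuotient u φ e x * φ x) * ζ x) • ∇ ζ x := by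
    rw [gradient_mul hw (hζd.fun_pow 2), gradient_sq hζd, h.derivQuotient_mul]
    module
  rw [fderiv_apply_eq_inner_gradient, fderiv_apply_eq_inner_gradient,
    gradient_mul hσ (hw.fun_mul (hζd.fun_pow 2)), hgtest, piconeDensity, piconeCross,
    ← h.derivQuotient_mul]
  simp only [linFlux, hgw]
  exact inner_amul_picone ..

theorem integral_picone (h : RegularPair Φ u φ) (hΦ : ContDiff ℝ 2 Φ) (hζ : ContDiff ℝ 2 ζ)
    (hsupp : HasCompactSupport ζ) (e : 𝔼 n) :
    ∫ x, (ζ x ^ 2 * piconeDensity Φ u φ e x + piconeCross Φ u φ e ζ x)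
      = ∫ x, ζ x ^ 2 * piconeDefect Φ u φ e x := by
  have hu : ContDiff ℝ 2 u := h.contDiff_left.of_le (by norm_num)
  have htest : ContDiff ℝ 2 fun y => fderiv ℝ u y e * ζ y ^ 2 :=
    (h.contDiff_fderiv_apply e).mul (hζ.pow 2)
  have htest_supp : HasCompactSupport fun y => fderiv ℝ u y e * ζ y ^ 2 :=
    HasCompactSupport.mul_left (hsupp.comp_left (g := fun t => t ^ 2) (by simp))
  have hσtest : ContDiff ℝ 2 fun y => derivQuotient u φ e y * (fderiv ℝ u y e * ζ y ^ 2) :=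
    (h.contDiff_derivQuotient e).mul htest
  have hσtest_supp := htest_supp.mul_left (f := derivQuotient u φ e)
  have hflux : ContDiff ℝ 1 (flux Φ u) := contDiff_flux hΦ hu
  have hdiff := integral_fderiv_apply_fderiv_eq_neg_integral_mul_fderiv_vdiv hflux
    h.contDiff_vdiv_flux htest htest_supp e
  have hlin := integral_fderiv_apply_eq_neg_integral_mul_vdiv h.differentiable_linFlux
    h.continuous_vdiv_linFlux (hσtest.of_le one_le_two) hσtest_supp
  simp only [fderiv_flux_apply hΦ hu] at hdiff
  simp only [← h.picone_identity hζ]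
  rw [integral_sub, hdiff, hlin, neg_sub_neg, ← integral_sub]
  · congr with x
    rw [piconeDefect, ← h.derivQuotient_mul]
    ring
  · exact (hσtest.continuous.mul
      h.continuous_vdiv_linFlux).integrable_of_hasCompactSupport hσtest_supp.mul_right
  · exact (htest.continuous.mul ((h.contDiff_vdiv_flux.continuous_fderiv one_ne_zero).clm_apply
      continuous_const)).integrable_of_hasCompactSupport htest_supp.mul_right
  · exact integrable_fderiv_apply (htest.of_le one_le_two) htest_supp
      (continuous_linFlux hΦ (hu.of_le one_le_two) ((h.contDiff_fderiv_apply e).of_le one_le_two))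
  · exact integrable_fderiv_apply (hσtest.of_le one_le_two) hσtest_supp
      h.differentiable_linFlux.continuous

end RegularPair

end Picone

/-! ### Cutoff functions -/

section Cutoff

variable {n : ℕ} {ζ : 𝔼 n → ℝ} {R L : ℝ}

theorem integrableOn_ball_of_continuous {f : 𝔼 n → ℝ} (hf : Continuous f) (x : 𝔼 n) (r : ℝ) :
    IntegrableOn f (ball x r) :=
  (hf.continuousOn.integrableOn_compact (isCompact_closedBall x r)).mono_set ball_subset_closedBall

/-- `ζ` is a cutoff function between the balls of radii `R` and `2 * R`, with gradient of the
natural size. -/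
structure IsCutoff (ζ : 𝔼 n → ℝ) (R L : ℝ) : Prop where
  contDiff : ContDiff ℝ 2 ζ
  nonneg : ∀ x, 0 ≤ ζ x
  le_one : ∀ x, ζ x ≤ 1
  eq_one : ∀ x ∈ ball 0 R, ζ x = 1
  tsupport_subset : tsupport ζ ⊆ ball 0 (2 * R)
  norm_gradient_le : ∀ x, ‖∇ ζ x‖ ≤ L / R

theorem exists_isCutoff (n : ℕ) : ∃ L, ∀ R, 0 < R → ∃ ζ : 𝔼 n → ℝ, IsCutoff ζ R L := by
  let b : ContDiffBump (0 : 𝔼 n) := ⟨1, 3 / 2, one_pos, by norm_num⟩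
  have hb : ContDiff ℝ 2 b := b.contDiff
  obtain ⟨L, hL⟩ := (hb.continuous_fderiv two_ne_zero).bounded_above_of_compact_support
    (b.hasCompactSupport.fderiv ℝ)
  refine ⟨L, fun R hR => ⟨fun x => b (R⁻¹ • x), ?_⟩⟩
  have hnorm : ∀ x : 𝔼 n, ‖R⁻¹ • x‖ = ‖x‖ / R := fun x => by
    rw [norm_smul_of_nonneg (by positivity), inv_mul_eq_div]
  constructor
  case contDiff => exact hb.comp (contDiff_const_smul R⁻¹)
  case nonneg => exact fun x => b.nonneg
  case le_one => exact fun x => b.le_one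
  case eq_one =>
    refine fun x hx => b.one_of_mem_closedBall ?_
    rw [mem_closedBall_zero_iff, hnorm]
    exact (div_le_one hR).2 (mem_ball_zero_iff.1 hx).le
  case tsupport_subset =>
    intro x hx
    have hmem := tsupport_comp_subset_preimage b (continuous_const_smul R⁻¹) hx
    rw [Set.mem_preimage, b.tsupport_eq, mem_closedBall_zero_iff, hnorm, div_le_iff₀ hR] at hmem
    have hrOut : b.rOut = 3 / 2 := rfl
    rw [hrOut] at hmem
    rw [mem_ball_zero_iff]
    linarith
  case norm_gradient_le =>
    intro x
    rw [norm_gradient, fderiv_comp_smul, norm_smul, Real.norm_of_nonneg (by positivity),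
      inv_mul_eq_div]
    gcongr
    exact hL _

namespace IsCutoff

theorem hasCompactSupport (h : IsCutoff ζ R L) : HasCompactSupport ζ :=
  isCompact_of_isClosed_isBounded (isClosed_tsupport ζ) (isBounded_ball.subset h.tsupport_subset)

theorem gradient_eq_zero_of_mem_ball (h : IsCutoff ζ R L) {x : 𝔼 n} (hx : x ∈ ball 0 R) :
    ∇ ζ x = 0 := by
  have hconst : ζ =ᶠ[nhds x] fun _ => 1 :=
    Filter.eventuallyEq_of_mem (isOpen_ball.mem_nhds hx) h.eq_one
  simp [gradient, hconst.fderiv_eq]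

theorem eq_zero_of_notMem_ball (h : IsCutoff ζ R L) {x : 𝔼 n} (hx : x ∉ ball 0 (2 * R)) :
    ζ x = 0 :=
  image_eq_zero_of_notMem_tsupport fun hmem => hx (h.tsupport_subset hmem)

theorem gradient_eq_zero_of_notMem_ball (h : IsCutoff ζ R L) {x : 𝔼 n}
    (hx : x ∉ ball 0 (2 * R)) : ∇ ζ x = 0 := by
  simp [gradient, fderiv_of_notMem_tsupport (𝕜 := ℝ) fun hmem => hx (h.tsupport_subset hmem)]

theorem norm_gradient_sq_le_indicator (h : IsCutoff ζ R L) (x : 𝔼 n) :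
    ‖∇ ζ x‖ ^ 2 ≤ (ball 0 (2 * R)).indicator (fun _ => (L / R) ^ 2) x := by
  by_cases hx : x ∈ ball 0 (2 * R)
  · rw [Set.indicator_of_mem hx]
    exact pow_le_pow_left₀ (norm_nonneg _) (h.norm_gradient_le x) 2
  · simp [Set.indicator_of_notMem hx, h.gradient_eq_zero_of_notMem_ball hx]

theorem integrable_mul_norm_gradient_sq (h : IsCutoff ζ R L) {w : 𝔼 n → ℝ} (hw : Continuous w) :
    Integrable fun x => w x * ‖∇ ζ x‖ ^ 2 := by
  have hgrad : Continuous (∇ ζ) := (contDiff_gradient (k := 1) h.contDiff).continuous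
  refine (hw.mul (hgrad.norm.pow 2)).integrable_of_hasCompactSupport
    ((h.hasCompactSupport.fderiv ℝ).mono fun x hx h0 => hx ?_)
  simp [norm_gradient, h0]

theorem integral_mul_norm_gradient_sq_le (h : IsCutoff ζ R L) {w : 𝔼 n → ℝ} (hw : Continuous w)
    (hw0 : ∀ x, 0 ≤ w x) :
    ∫ x, w x * ‖∇ ζ x‖ ^ 2 ≤ (L / R) ^ 2 * ∫ x in ball 0 (2 * R), w x := by
  have hwint : IntegrableOn w (ball 0 (2 * R)) := integrableOn_ball_of_continuous hw 0 (2 * R)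
  rw [← integral_const_mul, ← integral_indicator measurableSet_ball]
  refine integral_mono (h.integrable_mul_norm_gradient_sq hw)
    (IntegrableOn.integrable_indicator (hwint.const_mul _) measurableSet_ball) fun x => ?_
  calc w x * ‖∇ ζ x‖ ^ 2
      ≤ w x * (ball 0 (2 * R)).indicator (fun _ => (L / R) ^ 2) x :=
        mul_le_mul_of_nonneg_left (h.norm_gradient_sq_le_indicator x) (hw0 x)
    _ = (ball 0 (2 * R)).indicator (fun x => (L / R) ^ 2 * w x) x := by
        rw [mul_comm, Set.indicator_mul_left]

theorem integrable_sq_mul (h : IsCutoff ζ R L) {f : 𝔼 n → ℝ} (hf : Continuous f) :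
    Integrable fun x => ζ x ^ 2 * f x := by
  have hsupp : HasCompactSupport fun x => ζ x ^ 2 :=
    h.hasCompactSupport.comp_left (g := fun t => t ^ 2) (by simp)
  exact ((h.contDiff.continuous.pow 2).mul hf).integrable_of_hasCompactSupport hsupp.mul_right

theorem setIntegral_ball_le (h : IsCutoff ζ R L) {f : 𝔼 n → ℝ} (hf : Continuous f)
    (hf0 : ∀ x, 0 ≤ f x) : ∫ x in ball 0 R, f x ≤ ∫ x, ζ x ^ 2 * f x := by
  have hint : Integrable fun x => ζ x ^ 2 * f x :=
    h.integrable_sq_mul hf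
  calc ∫ x in ball 0 R, f x = ∫ x in ball 0 R, ζ x ^ 2 * f x :=
        setIntegral_congr_fun measurableSet_ball fun x hx => by simp [h.eq_one x hx]
    _ ≤ ∫ x, ζ x ^ 2 * f x := setIntegral_le_integral hint
        (Eventually.of_forall fun x => mul_nonneg (sq_nonneg _) (hf0 x))

end IsCutoff

end Cutoff

/-! ### The Caccioppoli inequality and energy growth -/

section Energy

variable {n : ℕ} {Φ : ℝ → ℝ} {u ζ : 𝔼 n → ℝ} {M : ℝ}

theorem inner_flux_gradient (Φ : ℝ → ℝ) (u : 𝔼 n → ℝ) (x : 𝔼 n) :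
    ⟪flux Φ u x, ∇ u x⟫ = deriv Φ (‖∇ u x‖ ^ 2) * ‖∇ u x‖ ^ 2 := by
  rw [flux, real_inner_smul_left, real_inner_self_eq_norm_sq]

theorem IsElliptic.inner_flux_gradient_nonneg (hΦ : IsElliptic Φ) (u : 𝔼 n → ℝ) (x : 𝔼 n) :
    0 ≤ ⟪flux Φ u x, ∇ u x⟫ := by
  rw [inner_flux_gradient]
  exact mul_nonneg (hΦ.deriv_nonneg (sq_nonneg _)) (sq_nonneg _)

theorem IsElliptic.piconeError_nonneg (hΦ : IsElliptic Φ) (u : 𝔼 n → ℝ) (e : 𝔼 n)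
    (ζ : 𝔼 n → ℝ) (x : 𝔼 n) : 0 ≤ piconeError Φ u e ζ x :=
  mul_nonneg (sq_nonneg _) (hΦ.inner_amul_nonneg _ _)

theorem continuous_inner_flux_gradient (hΦ : ContDiff ℝ 2 Φ) (hu : ContDiff ℝ 2 u) :
    Continuous fun x => ⟪flux Φ u x, ∇ u x⟫ :=
  (contDiff_flux hΦ hu).continuous.inner (contDiff_gradient (k := 1) hu).continuous

-- The difference of the two sides is at least `Φ'(|∇u|²) |ζ∇u - 2(M - u)∇ζ|²`.
theorem sq_mul_inner_flux_gradient_le {x : 𝔼 n} (hu : DifferentiableAt ℝ u x)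
    (hζ : DifferentiableAt ℝ ζ x) (hM : |u x| ≤ M) (hΦ' : 0 ≤ deriv Φ (‖∇ u x‖ ^ 2)) :
    ζ x ^ 2 * ⟪flux Φ u x, ∇ u x⟫
      ≤ 16 * M ^ 2 * (deriv Φ (‖∇ u x‖ ^ 2) * ‖∇ ζ x‖ ^ 2)
        - 2 * fderiv ℝ (fun y => (M - u y) * ζ y ^ 2) x (flux Φ u x) := by
  have hgtest : ∇ (fun y => (M - u y) * ζ y ^ 2) x
      = (2 * (M - u x) * ζ x) • ∇ ζ x - ζ x ^ 2 • ∇ u x := by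
    have hneg : ∇ (fun y => M - u y) x = -∇ u x := by
      simp [gradient, fderiv_const_sub]
    rw [gradient_mul (hu.const_sub M) (hζ.fun_pow 2), gradient_sq hζ, hneg]
    module
  have hsq : (2 * (M - u x)) ^ 2 ≤ 16 * M ^ 2 := by
    obtain ⟨hlo, hhi⟩ := abs_le.1 hM
    nlinarith
  have hsquare : 0 ≤ ζ x ^ 2 * ‖∇ u x‖ ^ 2 - 4 * (M - u x) * ζ x * ⟪∇ u x, ∇ ζ x⟫
      + (2 * (M - u x)) ^ 2 * ‖∇ ζ x‖ ^ 2 := by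
    have h := sq_nonneg ‖ζ x • ∇ u x - (2 * (M - u x)) • ∇ ζ x‖
    rw [norm_sub_sq_real, norm_smul, norm_smul, real_inner_smul_left, real_inner_smul_right,
      mul_pow, mul_pow, Real.norm_eq_abs, Real.norm_eq_abs, sq_abs, sq_abs] at h
    linarith
  have hdiff := mul_nonneg hΦ' (add_nonneg hsquare
    (mul_nonneg (sub_nonneg.2 hsq) (sq_nonneg ‖∇ ζ x‖)))
  rw [fderiv_apply_eq_inner_gradient, hgtest, inner_sub_right, inner_flux_gradient]
  simp only [flux, real_inner_smul_left, real_inner_smul_right, real_inner_self_eq_norm_sq]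
  linarith

/-- `u` is a bounded function with bounded gradient and `div (Φ'(|∇u|²)∇u) ≤ 0`. -/
structure IsBoundedSupersolution (Φ : ℝ → ℝ) (u : 𝔼 n → ℝ) : Prop where
  contDiff : ContDiff ℝ 2 u
  exists_abs_le : ∃ M, ∀ x, |u x| ≤ M
  exists_norm_gradient_le : ∃ G, ∀ x, ‖∇ u x‖ ≤ G
  vdiv_flux_nonpos : ∀ x, vdiv (flux Φ u) x ≤ 0

namespace IsBoundedSupersolution

theorem exists_integral_sq_mul_inner_flux_gradient_le (h : IsBoundedSupersolution Φ u)
    (hΦ : IsElliptic Φ) : ∃ C, ∀ ζ R L, IsCutoff ζ R L →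
      ∫ x, ζ x ^ 2 * ⟪flux Φ u x, ∇ u x⟫
        ≤ C * ∫ x, deriv Φ (‖∇ u x‖ ^ 2) * ‖∇ ζ x‖ ^ 2 := by
  obtain ⟨M, hM⟩ := h.exists_abs_le
  refine ⟨16 * M ^ 2, fun ζ R L hζ => ?_⟩
  have htest : ContDiff ℝ 1 fun y => (M - u y) * ζ y ^ 2 :=
    ((contDiff_const.sub h.contDiff).mul (hζ.contDiff.pow 2)).of_le one_le_two
  have hsq_supp : HasCompactSupport fun y => ζ y ^ 2 :=
    hζ.hasCompactSupport.comp_left (g := fun t => t ^ 2) (by simp)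
  have htest_supp : HasCompactSupport fun y => (M - u y) * ζ y ^ 2 := hsq_supp.mul_left
  have hflux : ContDiff ℝ 1 (flux Φ u) := contDiff_flux hΦ.contDiff h.contDiff
  have hintF := integrable_fderiv_apply htest htest_supp hflux.continuous
  have hintζ := hζ.integrable_mul_norm_gradient_sq
    ((contDiff_deriv_norm_gradient_sq hΦ.contDiff h.contDiff).continuous)
  have hweak : 0 ≤ ∫ x, fderiv ℝ (fun y => (M - u y) * ζ y ^ 2) x (flux Φ u x) := by
    rw [integral_fderiv_apply_eq_neg_integral_mul_vdiv (hflux.differentiable one_ne_zero)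
      (continuous_vdiv hflux) htest htest_supp, ← integral_neg]
    refine integral_nonneg fun x => neg_nonneg.2 <| mul_nonpos_of_nonneg_of_nonpos
      (mul_nonneg (sub_nonneg.2 (le_of_abs_le (hM x))) (sq_nonneg _)) (h.vdiv_flux_nonpos x)
  calc ∫ x, ζ x ^ 2 * ⟪flux Φ u x, ∇ u x⟫
      ≤ ∫ x, (16 * M ^ 2 * (deriv Φ (‖∇ u x‖ ^ 2) * ‖∇ ζ x‖ ^ 2)
          - 2 * fderiv ℝ (fun y => (M - u y) * ζ y ^ 2) x (flux Φ u x)) :=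
        integral_mono
          (hζ.integrable_sq_mul (continuous_inner_flux_gradient hΦ.contDiff h.contDiff))
          ((hintζ.const_mul _).sub (hintF.const_mul _)) fun x =>
            sq_mul_inner_flux_gradient_le (h.contDiff.differentiable two_ne_zero x)
              (hζ.contDiff.differentiable two_ne_zero x) (hM x) (hΦ.deriv_nonneg (sq_nonneg _))
    _ ≤ 16 * M ^ 2 * ∫ x, deriv Φ (‖∇ u x‖ ^ 2) * ‖∇ ζ x‖ ^ 2 := by
        rw [integral_sub (hintζ.const_mul _) (hintF.const_mul _), integral_const_mul,
          integral_const_mul]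
        linarith

theorem exists_deriv_le (h : IsBoundedSupersolution Φ u) (hΦ : IsElliptic Φ) :
    ∃ K, ∀ x, deriv Φ (‖∇ u x‖ ^ 2) ≤ K := by
  obtain ⟨G, hG⟩ := h.exists_norm_gradient_le
  have hΦ' : Continuous (deriv Φ) := hΦ.contDiff.continuous_deriv (by norm_num)
  obtain ⟨K, hK⟩ := (isCompact_Icc (a := 0) (b := G ^ 2)).bddAbove_image hΦ'.continuousOn
  exact ⟨K, fun x => hK ⟨_, ⟨sq_nonneg _, pow_le_pow_left₀ (norm_nonneg _) (hG x) 2⟩, rfl⟩⟩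

theorem exists_setIntegral_inner_flux_gradient_le (h : IsBoundedSupersolution Φ u)
    (hΦ : IsElliptic Φ) :
    ∃ C, ∀ R, 0 < R → ∫ x in ball 0 R, ⟪flux Φ u x, ∇ u x⟫ ≤ C * (R ^ n / R ^ 2) := by
  obtain ⟨A, hA⟩ := h.exists_integral_sq_mul_inner_flux_gradient_le hΦ
  obtain ⟨K, hK⟩ := h.exists_deriv_le hΦ
  obtain ⟨L, hL⟩ := exists_isCutoff n
  have hcont : Continuous fun x => deriv Φ (‖∇ u x‖ ^ 2) :=
    (contDiff_deriv_norm_gradient_sq hΦ.contDiff h.contDiff).continuous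
  refine ⟨|A| * (L ^ 2 * (K * (2 ^ n * volume.real (ball (0 : 𝔼 n) 1)))), fun R hR => ?_⟩
  obtain ⟨ζ, hζ⟩ := hL R hR
  have hvol : volume.real (ball (0 : 𝔼 n) (2 * R))
      = (2 * R) ^ n * volume.real (ball (0 : 𝔼 n) 1) := by
    rw [Measure.real, Measure.addHaar_ball_of_pos _ _ (by positivity), ENNReal.toReal_mul,
      ENNReal.toReal_ofReal (by positivity), finrank_euclideanSpace_fin, Measure.real]
  have hball : ∫ x in ball 0 (2 * R), deriv Φ (‖∇ u x‖ ^ 2)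
      ≤ K * volume.real (ball (0 : 𝔼 n) (2 * R)) := by
    refine (setIntegral_mono (integrableOn_ball_of_continuous hcont 0 (2 * R))
      (integrableOn_ball_of_continuous continuous_const 0 (2 * R)) hK).trans_eq ?_
    rw [setIntegral_const, smul_eq_mul, mul_comm]
  have hnonneg : 0 ≤ ∫ x, deriv Φ (‖∇ u x‖ ^ 2) * ‖∇ ζ x‖ ^ 2 := integral_nonneg fun x =>
    mul_nonneg (hΦ.deriv_nonneg (sq_nonneg _)) (sq_nonneg _)
  calc ∫ x in ball 0 R, ⟪flux Φ u x, ∇ u x⟫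
      ≤ ∫ x, ζ x ^ 2 * ⟪flux Φ u x, ∇ u x⟫ :=
        hζ.setIntegral_ball_le (continuous_inner_flux_gradient hΦ.contDiff h.contDiff)
          (hΦ.inner_flux_gradient_nonneg u)
    _ ≤ A * ∫ x, deriv Φ (‖∇ u x‖ ^ 2) * ‖∇ ζ x‖ ^ 2 := hA ζ R L hζ
    _ ≤ |A| * ∫ x, deriv Φ (‖∇ u x‖ ^ 2) * ‖∇ ζ x‖ ^ 2 := by gcongr; exact le_abs_self A
    _ ≤ |A| * ((L / R) ^ 2 * (K * volume.real (ball (0 : 𝔼 n) (2 * R)))) := by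
        gcongr
        exact (hζ.integral_mul_norm_gradient_sq_le hcont
          fun x => hΦ.deriv_nonneg (sq_nonneg _)).trans (by gcongr)
    _ = |A| * (L ^ 2 * (K * (2 ^ n * volume.real (ball (0 : 𝔼 n) 1)))) * (R ^ n / R ^ 2) := by
        rw [hvol, mul_pow]
        ring

theorem exists_integral_piconeError_le (h : IsBoundedSupersolution Φ u) (hΦ : IsElliptic Φ)
    (hΦn : LocallyDominated n Φ) (e : 𝔼 n) (L : ℝ) :
    ∃ C, ∀ ζ R, 0 < R → IsCutoff ζ R L → ∫ x, piconeError Φ u e ζ x ≤ C * (R ^ n / R ^ 4) := by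
  obtain ⟨G, hG⟩ := h.exists_norm_gradient_le
  obtain ⟨Λ, hΛ⟩ := hΦn G
  obtain ⟨C, hC⟩ := h.exists_setIntegral_inner_flux_gradient_le hΦ
  have henergy : Continuous fun x => ⟪flux Φ u x, ∇ u x⟫ :=
    continuous_inner_flux_gradient hΦ.contDiff h.contDiff
  refine ⟨‖e‖ ^ 2 * |Λ| * L ^ 2 * (C * (2 ^ n / 2 ^ 2)), fun ζ R hR hζ => ?_⟩
  have hpoint : ∀ x, piconeError Φ u e ζ x
      ≤ ‖e‖ ^ 2 * |Λ| * (⟪flux Φ u x, ∇ u x⟫ * ‖∇ ζ x‖ ^ 2) := fun x => by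
    have hΦ' : 0 ≤ deriv Φ (‖∇ u x‖ ^ 2) := hΦ.deriv_nonneg (sq_nonneg _)
    have hderiv : fderiv ℝ u x e ^ 2 ≤ ‖e‖ ^ 2 * ‖∇ u x‖ ^ 2 := by
      rw [fderiv_apply_eq_inner_gradient, ← mul_pow, ← sq_abs]
      gcongr
      exact abs_real_inner_le_norm ..
    calc piconeError Φ u e ζ x
        ≤ (‖e‖ ^ 2 * ‖∇ u x‖ ^ 2) * (|Λ| * deriv Φ (‖∇ u x‖ ^ 2) * ‖∇ ζ x‖ ^ 2) := by
          refine mul_le_mul hderiv ((hΛ _ (hG x) _).trans ?_) (hΦ.inner_amul_nonneg _ _)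
            (by positivity)
          gcongr
          exact le_abs_self Λ
      _ = ‖e‖ ^ 2 * |Λ| * (⟪flux Φ u x, ∇ u x⟫ * ‖∇ ζ x‖ ^ 2) := by
          rw [inner_flux_gradient]
          ring
  calc ∫ x, piconeError Φ u e ζ x
      ≤ ∫ x, ‖e‖ ^ 2 * |Λ| * (⟪flux Φ u x, ∇ u x⟫ * ‖∇ ζ x‖ ^ 2) :=
        integral_mono_of_nonneg (Eventually.of_forall fun x => hΦ.piconeError_nonneg u e ζ x)
          ((hζ.integrable_mul_norm_gradient_sq henergy).const_mul _) (Eventually.of_forall hpoint)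
    _ ≤ ‖e‖ ^ 2 * |Λ| * ((L / R) ^ 2 * (C * ((2 * R) ^ n / (2 * R) ^ 2))) := by
        rw [integral_const_mul]
        gcongr
        exact (hζ.integral_mul_norm_gradient_sq_le henergy
          (hΦ.inner_flux_gradient_nonneg u)).trans (by gcongr; exact hC _ (by positivity))
    _ = ‖e‖ ^ 2 * |Λ| * L ^ 2 * (C * (2 ^ n / 2 ^ 2)) * (R ^ n / R ^ 4) := by
        rw [mul_pow 2 R n]
        field_simp

end IsBoundedSupersolution

end Energy

/-! ### The hole-filling argument -/

section HoleFilling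

theorem nonpos_of_monotone_of_hole_filling {B : ℝ → ℝ} (hB : Monotone B) {C : ℝ}
    (hstep : ∀ R, 1 ≤ R → ∀ t ∈ Set.Ioc (0 : ℝ) 1, B R ≤ (1 - t) * B (2 * R) + t ^ 2 * C) (R : ℝ) :
    B R ≤ 0 := by
  have hbound : ∀ R, B R ≤ C := fun R => by
    have := hstep (max R 1) (le_max_right R 1) 1 ⟨one_pos, le_rfl⟩
    exact (hB (le_max_left R 1)).trans (by simpa using this)
  have hbdd : BddAbove (Set.range B) := ⟨C, Set.forall_mem_range.2 hbound⟩
  have hlim : Tendsto B atTop (nhds (⨆ R, B R)) := tendsto_atTop_ciSup hB hbdd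
  have hlim₂ : Tendsto (fun R => B (2 * R)) atTop (nhds (⨆ R, B R)) :=
    hlim.comp (tendsto_id.const_mul_atTop two_pos)
  have hsup : ∀ t ∈ Set.Ioc (0 : ℝ) 1, ⨆ R, B R ≤ t * C := fun t ht => by
    have hle : ⨆ R, B R ≤ (1 - t) * (⨆ R, B R) + t ^ 2 * C :=
      le_of_tendsto_of_tendsto hlim ((hlim₂.const_mul _).add_const _)
        ((eventually_ge_atTop 1).mono fun R hR => hstep R hR t ht)
    refine le_of_mul_le_mul_left ?_ ht.1
    linarith
  have hzero : Tendsto (fun t : ℝ => t * C) (nhdsWithin 0 (Set.Ioi 0)) (nhds 0) :=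
    tendsto_nhdsWithin_of_tendsto_nhds (by simpa using (continuous_mul_const C).tendsto 0)
  exact (le_ciSup hbdd R).trans <|
    ge_of_tendsto hzero <| eventually_of_mem (Ioc_mem_nhdsGT one_pos) hsup

variable {n : ℕ} {Φ : ℝ → ℝ} {u φ ζ : 𝔼 n → ℝ} {R L t : ℝ}

theorem IsElliptic.piconeDensity_nonneg (hΦ : IsElliptic Φ) (u φ : 𝔼 n → ℝ) (e x : 𝔼 n) :
    0 ≤ piconeDensity Φ u φ e x :=
  mul_nonneg (sq_nonneg _) (hΦ.inner_amul_nonneg _ _)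

theorem IsElliptic.picone_young (hΦ : IsElliptic Φ) (u φ ζ : 𝔼 n → ℝ) (e x : 𝔼 n) (t : ℝ) :
    0 ≤ ζ x ^ 2 * piconeDensity Φ u φ e x + t * piconeCross Φ u φ e ζ x
      + t ^ 2 * piconeError Φ u e ζ x := by
  have h := hΦ.inner_amul_nonneg (∇ u x)
    ((ζ x * φ x) • ∇ (derivQuotient u φ e) x + (t * fderiv ℝ u x e) • ∇ ζ x)
  simp only [amul_add, amul_smul, inner_add_left, inner_add_right, real_inner_smul_left,
    real_inner_smul_right] at h
  rw [inner_amul_comm Φ _ (∇ ζ x)] at h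
  simp only [piconeDensity, piconeCross, piconeError, linFlux]
  linarith

-- Off the ball of radius `R` this is Young's inequality for the cross term; on that ball `∇ζ = 0`,
-- so the cross term vanishes.
theorem IsCutoff.indicator_piconeDensity_le (hζ : IsCutoff ζ R L) (hΦ : IsElliptic Φ)
    (hR : 0 ≤ R) (ht : t ≤ 1) (u φ : 𝔼 n → ℝ) (e x : 𝔼 n) :
    (ball 0 R).indicator (piconeDensity Φ u φ e) x
      ≤ (1 - t) * (ball 0 (2 * R)).indicator (piconeDensity Φ u φ e) x
        + t * (ζ x ^ 2 * piconeDensity Φ u φ e x + piconeCross Φ u φ e ζ x)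
        + t ^ 2 * piconeError Φ u e ζ x := by
  have hN : 0 ≤ piconeDensity Φ u φ e x := hΦ.piconeDensity_nonneg u φ e x
  have hyoung := hΦ.picone_young u φ ζ e x t
  by_cases hx : x ∈ ball 0 R
  · have hx₂ : x ∈ ball 0 (2 * R) := ball_subset_ball (by linarith) hx
    have hX : piconeCross Φ u φ e ζ x = 0 := by
      simp [piconeCross, hζ.gradient_eq_zero_of_mem_ball hx]
    have hY := mul_nonneg (sq_nonneg t) (hΦ.piconeError_nonneg u e ζ x)
    rw [Set.indicator_of_mem hx, Set.indicator_of_mem hx₂, hζ.eq_one x hx, hX]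
    linarith
  rw [Set.indicator_of_notMem hx]
  by_cases hx₂ : x ∈ ball 0 (2 * R)
  · have hζ1 : ζ x ^ 2 ≤ 1 := pow_le_one₀ (hζ.nonneg x) (hζ.le_one x)
    have := mul_nonneg (mul_nonneg (sub_nonneg.2 ht) (sub_nonneg.2 hζ1)) hN
    rw [Set.indicator_of_mem hx₂]
    linarith
  · rw [Set.indicator_of_notMem hx₂]
    rw [hζ.eq_zero_of_notMem_ball hx₂] at hyoung ⊢
    linarith

theorem RegularPair.setIntegral_piconeDensity_le (h : RegularPair Φ u φ) (hΦ : IsElliptic Φ)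
    (hζ : IsCutoff ζ R L) (hR : 0 ≤ R) (ht : t ≤ 1) (e : 𝔼 n) :
    ∫ x in ball 0 R, piconeDensity Φ u φ e x
      ≤ (1 - t) * (∫ x in ball 0 (2 * R), piconeDensity Φ u φ e x)
        + t * (∫ x, ζ x ^ 2 * piconeDefect Φ u φ e x) + t ^ 2 * ∫ x, piconeError Φ u e ζ x := by
  have hN : Continuous (piconeDensity Φ u φ e) := h.continuous_piconeDensity hΦ.contDiff e
  have hNball : ∀ r, Integrable ((ball 0 r).indicator (piconeDensity Φ u φ e)) := fun r =>
    (integrableOn_ball_of_continuous hN 0 r).integrable_indicator measurableSet_ball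
  have hgrad_supp : HasCompactSupport (∇ ζ) :=
    (hζ.hasCompactSupport.fderiv ℝ).mono fun x hx h0 => hx (by simp [gradient, h0])
  have hX : Integrable fun x => ζ x ^ 2 * piconeDensity Φ u φ e x + piconeCross Φ u φ e ζ x :=
    (hζ.integrable_sq_mul hN).add <|
      (h.continuous_piconeCross hΦ.contDiff e hζ.contDiff).integrable_of_hasCompactSupport <|
        hgrad_supp.mono fun x hx h0 => hx (by simp [piconeCross, h0])
  have hY : Integrable (piconeError Φ u e ζ) :=
    (continuous_piconeError hΦ.contDiff (h.contDiff_left.of_le (by norm_num))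
      hζ.contDiff e).integrable_of_hasCompactSupport <|
        hgrad_supp.mono fun x hx h0 => hx (by simp [piconeError, h0])
  have hle := integral_mono (hNball R)
    ((((hNball (2 * R)).const_mul (1 - t)).add (hX.const_mul t)).add (hY.const_mul (t ^ 2)))
    fun x => hζ.indicator_piconeDensity_le hΦ hR ht u φ e x
  rwa [integral_add' (((hNball (2 * R)).const_mul (1 - t)).add (hX.const_mul t))
      (hY.const_mul (t ^ 2)),
    integral_add' ((hNball (2 * R)).const_mul (1 - t)) (hX.const_mul t), integral_const_mul,
    integral_const_mul, integral_const_mul, integral_indicator measurableSet_ball,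
    integral_indicator measurableSet_ball,
    h.integral_picone hΦ.contDiff hζ.contDiff hζ.hasCompactSupport e] at hle

theorem eq_zero_of_setIntegral_ball_nonpos {f : 𝔼 n → ℝ} (hf : Continuous f) (hf0 : ∀ x, 0 ≤ f x)
    (h : ∀ R, ∫ x in ball 0 R, f x ≤ 0) (x : 𝔼 n) : f x = 0 := by
  have hzero : f =ᵐ[volume.restrict (ball 0 (‖x‖ + 1))] 0 :=
    (setIntegral_eq_zero_iff_of_nonneg_ae (Eventually.of_forall hf0)
      (integrableOn_ball_of_continuous hf 0 (‖x‖ + 1))).1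
        ((h _).antisymm (integral_nonneg hf0))
  exact Measure.eqOn_open_of_ae_eq hzero isOpen_ball hf.continuousOn continuousOn_const (by simp)

section System

variable {ι : Type*} [Fintype ι] {u φ : ι → 𝔼 n → ℝ}

theorem exists_sum_setIntegral_piconeDensity_le (hn : n ≤ 4) (hΦ : IsElliptic Φ)
    (hΦn : LocallyDominated n Φ) (h : ∀ i, RegularPair Φ (u i) (φ i))
    (hu : ∀ i, IsBoundedSupersolution Φ (u i)) (e : 𝔼 n)
    (hdefect : ∀ x, ∑ i, piconeDefect Φ (u i) (φ i) e x ≤ 0) :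
    ∃ C, ∀ R, 1 ≤ R → ∀ t ∈ Set.Ioc (0 : ℝ) 1,
      ∑ i, ∫ x in ball 0 R, piconeDensity Φ (u i) (φ i) e x
        ≤ (1 - t) * (∑ i, ∫ x in ball 0 (2 * R), piconeDensity Φ (u i) (φ i) e x)
          + t ^ 2 * C := by
  obtain ⟨L, hL⟩ := exists_isCutoff n
  choose C hC using fun i => (hu i).exists_integral_piconeError_le hΦ hΦn e L
  refine ⟨∑ i, |C i|, fun R hR t ht => ?_⟩
  have hR0 : 0 < R := one_pos.trans_le hR
  obtain ⟨ζ, hζ⟩ := hL R hR0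
  have hdef : ∑ i, ∫ x, ζ x ^ 2 * piconeDefect Φ (u i) (φ i) e x ≤ 0 := by
    rw [← integral_finsetSum _ fun i _ => hζ.integrable_sq_mul ((h i).continuous_piconeDefect e)]
    refine integral_nonpos fun x => ?_
    simp only [← Finset.mul_sum]
    exact mul_nonpos_of_nonneg_of_nonpos (sq_nonneg _) (hdefect x)
  have hgrowth : R ^ n / R ^ 4 ≤ 1 := div_le_one_of_le₀ (pow_le_pow_right₀ hR hn) (by positivity)
  have herr : ∑ i, ∫ x, piconeError Φ (u i) e ζ x ≤ ∑ i, |C i| :=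
    Finset.sum_le_sum fun i _ =>
      calc ∫ x, piconeError Φ (u i) e ζ x
          ≤ C i * (R ^ n / R ^ 4) := hC i ζ R hR0 hζ
        _ ≤ |C i| * (R ^ n / R ^ 4) := by gcongr; exact le_abs_self _
        _ ≤ |C i| := mul_le_of_le_one_right (abs_nonneg _) hgrowth
  have hsum := Finset.sum_le_sum fun i (_ : i ∈ Finset.univ) =>
    (h i).setIntegral_piconeDensity_le hΦ hζ hR0.le ht.2 e
  simp only [Finset.sum_add_distrib, ← Finset.mul_sum] at hsum
  linarith [mul_nonpos_of_nonneg_of_nonpos ht.1.le hdef,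
    mul_le_mul_of_nonneg_left herr (sq_nonneg t)]

theorem piconeDensity_eq_zero (hn : n ≤ 4) (hΦ : IsElliptic Φ) (hΦn : LocallyDominated n Φ)
    (h : ∀ i, RegularPair Φ (u i) (φ i)) (hu : ∀ i, IsBoundedSupersolution Φ (u i)) (e : 𝔼 n)
    (hdefect : ∀ x, ∑ i, piconeDefect Φ (u i) (φ i) e x ≤ 0) (i : ι) (x : 𝔼 n) :
    piconeDensity Φ (u i) (φ i) e x = 0 := by
  have hN : ∀ i, Continuous (piconeDensity Φ (u i) (φ i) e) := fun i =>
    (h i).continuous_piconeDensity hΦ.contDiff e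
  have hN0 : ∀ i x, 0 ≤ piconeDensity Φ (u i) (φ i) e x := fun i =>
    hΦ.piconeDensity_nonneg (u i) (φ i) e
  have hmono : Monotone fun R => ∑ i, ∫ x in ball 0 R, piconeDensity Φ (u i) (φ i) e x :=
    fun R S hRS => Finset.sum_le_sum fun i _ =>
      setIntegral_mono_set (integrableOn_ball_of_continuous (hN i) 0 S)
        (Eventually.of_forall (hN0 i)) (ball_subset_ball hRS).eventuallyLE
  obtain ⟨C, hstep⟩ := exists_sum_setIntegral_piconeDensity_le hn hΦ hΦn h hu e hdefect
  refine eq_zero_of_setIntegral_ball_nonpos (hN i) (hN0 i) (fun R => ?_) x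
  exact (Finset.single_le_sum (fun j _ => integral_nonneg (hN0 j)) (Finset.mem_univ i)).trans
    (nonpos_of_monotone_of_hole_filling hmono hstep R)

end System

end HoleFilling

/-! ### Bounded supersolutions with gradient of constant direction -/

section ConstantDirection

theorem nonpos_of_abs_le_of_le_deriv {g g' : ℝ → ℝ} {M a : ℝ}
    (hg : ∀ t, HasDerivAt g (g' t) t) (hM : ∀ t, |g t| ≤ M) (ha : ∀ t ≤ 0, a ≤ g' t) : a ≤ 0 := by
  by_contra! ha0
  have hM0 : 0 ≤ M := (abs_nonneg _).trans (hM 0)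
  have hT : 0 < (2 * M + 1) / a := by positivity
  have hgrow := (convex_Iic (0 : ℝ)).mul_sub_le_image_sub_of_le_deriv (C := a)
    (fun t _ => (hg t).continuousAt.continuousWithinAt)
    (fun t _ => (hg t).differentiableAt.differentiableWithinAt)
    (fun t ht => by
      rw [(hg t).deriv]
      exact ha t (show t ∈ Set.Iic (0 : ℝ) from interior_subset ht))
    (-((2 * M + 1) / a)) (neg_nonpos.2 hT.le) 0 Set.self_mem_Iic (neg_nonpos.2 hT.le)
  rw [zero_sub, neg_neg, mul_div_cancel₀ _ ha0.ne'] at hgrow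
  linarith [le_of_abs_le (hM 0), neg_le_of_abs_le (hM (-((2 * M + 1) / a)))]

variable {n : ℕ} {Φ : ℝ → ℝ} {f u φ : 𝔼 n → ℝ} {c : 𝔼 n}

theorem hasDerivAt_comp_smul (hf : Differentiable ℝ f) (c : 𝔼 n) (t : ℝ) :
    HasDerivAt (fun t : ℝ => f (t • c)) (fderiv ℝ f (t • c) c) t :=
  (hf (t • c)).hasFDerivAt.comp_hasDerivAt t (by simpa using (hasDerivAt_id t).smul_const c)

theorem antitone_of_vdiv_smul_const_nonpos (hf : Differentiable ℝ f)
    (hdiv : ∀ x, vdiv (fun y => f y • c) x ≤ 0) : Antitone fun t : ℝ => f (t • c) := by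
  refine antitone_of_hasDerivAt_nonpos (hasDerivAt_comp_smul hf c) fun t => ?_
  have hconst : vdiv (fun _ => c) (t • c) = 0 := vdiv_eq_zero_of_fderiv_eq_zero (by simp)
  have := hdiv (t • c)
  rwa [vdiv_smul (differentiableAt_const c) (hf _), hconst, mul_zero, zero_add] at this

namespace IsBoundedSupersolution

-- The equation makes `Φ'(|∇u|²)φ` nonincreasing along `t ↦ t • c`, so `φ` is bounded below for
-- `t ≤ 0` and `u` is unbounded along this half-line.
theorem eq_zero_of_gradient_eq_pos_smul (h : IsBoundedSupersolution Φ u) (hΦ : IsElliptic Φ)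
    (hφ : ContDiff ℝ 1 φ) (hφ0 : ∀ x, 0 < φ x) (hc : ∀ x, ∇ u x = φ x • c) : c = 0 := by
  by_contra hc0
  obtain ⟨M, hM⟩ := h.exists_abs_le
  obtain ⟨K, hK⟩ := h.exists_deriv_le hΦ
  have hΦ' : ∀ x, 0 < deriv Φ (‖∇ u x‖ ^ 2) := fun x => by
    have : ∇ u x ≠ 0 := hc x ▸ smul_ne_zero (hφ0 x).ne' hc0
    exact hΦ.deriv_pos _ (by positivity)
  have hK0 : 0 < K := (hΦ' 0).trans_le (hK 0)
  have hflux : flux Φ u = fun x => (deriv Φ (‖∇ u x‖ ^ 2) * φ x) • c :=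
    funext fun x => by rw [flux, mul_smul, ← hc]
  have hf : ContDiff ℝ 1 fun x => deriv Φ (‖∇ u x‖ ^ 2) * φ x :=
    (contDiff_deriv_norm_gradient_sq hΦ.contDiff h.contDiff).mul hφ
  have hanti := antitone_of_vdiv_smul_const_nonpos (hf.differentiable one_ne_zero)
    (hflux ▸ h.vdiv_flux_nonpos)
  have hslope : ∀ t ≤ (0 : ℝ),
      deriv Φ (‖∇ u 0‖ ^ 2) * φ 0 / K * ‖c‖ ^ 2 ≤ fderiv ℝ u (t • c) c := fun t ht => by
    rw [fderiv_apply_eq_inner_gradient, hc (t • c), real_inner_smul_right,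
      real_inner_self_eq_norm_sq]
    gcongr
    rw [div_le_iff₀' hK0]
    calc deriv Φ (‖∇ u 0‖ ^ 2) * φ 0
        ≤ deriv Φ (‖∇ u (t • c)‖ ^ 2) * φ (t • c) := by simpa only [zero_smul] using hanti ht
      _ ≤ K * φ (t • c) := mul_le_mul_of_nonneg_right (hK _) (hφ0 _).le
  have hslope_nonpos := nonpos_of_abs_le_of_le_deriv
    (hasDerivAt_comp_smul (h.contDiff.differentiable two_ne_zero) c) (fun t => hM (t • c)) hslope
  have hΦ'0 := hΦ' 0
  have hφ00 := hφ0 0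
  have hslope_pos : 0 < deriv Φ (‖∇ u 0‖ ^ 2) * φ 0 / K * ‖c‖ ^ 2 := by positivity
  exact hslope_nonpos.not_gt hslope_pos

theorem eq_zero_of_gradient_eq_smul (h : IsBoundedSupersolution Φ u) (hΦ : IsElliptic Φ)
    (hφ : ContDiff ℝ 1 φ) (hφ0 : ∀ x, φ x ≠ 0) (hc : ∀ x, ∇ u x = φ x • c) : c = 0 := by
  have hsign : (∀ x, 0 < φ x) ∨ ∀ x, φ x < 0 := by
    by_contra! hchange
    obtain ⟨⟨x, hx⟩, y, hy⟩ := hchange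
    obtain ⟨z, hz⟩ := mem_range_of_exists_le_of_exists_ge hφ.continuous ⟨x, hx⟩ ⟨y, hy⟩
    exact hφ0 z hz
  rcases hsign with hpos | hneg
  · exact h.eq_zero_of_gradient_eq_pos_smul hΦ hφ hpos hc
  · exact neg_eq_zero.1 <| h.eq_zero_of_gradient_eq_pos_smul hΦ hφ.neg
      (fun x => neg_pos.2 (hneg x)) fun x => by simp [hc]

end IsBoundedSupersolution

end ConstantDirection

/-! ### Stable solutions of symmetric systems -/

section Stable

theorem sum_mul_mul_sub_sq_nonpos {ι : Type*} [Fintype ι] {b : ι → ι → ℝ} (s : ι → ℝ)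
    (hsymm : ∀ i j, b i j = b j i) (hb : ∀ i j, 0 ≤ b i j) :
    ∑ i, ∑ j, b i j * (s i * s j - s i ^ 2) ≤ 0 := by
  have hswap : ∑ i, ∑ j, b i j * (s i * s j - s i ^ 2)
      = ∑ i, ∑ j, b i j * (s i * s j - s j ^ 2) := by
    rw [Finset.sum_comm]
    refine Finset.sum_congr rfl fun i _ => Finset.sum_congr rfl fun j _ => ?_
    rw [hsymm j i, mul_comm (s j)]
  have hsquare : ∑ i, ∑ j, b i j * (s i * s j - s i ^ 2)
      + ∑ i, ∑ j, b i j * (s i * s j - s j ^ 2) = -∑ i, ∑ j, b i j * (s i - s j) ^ 2 := by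
    simp only [← Finset.sum_add_distrib, ← Finset.sum_neg_distrib]
    refine Finset.sum_congr rfl fun i _ => Finset.sum_congr rfl fun j _ => ?_
    ring
  have hnonneg : 0 ≤ ∑ i, ∑ j, b i j * (s i - s j) ^ 2 :=
    Finset.sum_nonneg fun i _ => Finset.sum_nonneg fun j _ => mul_nonneg (hb i j) (sq_nonneg _)
  linarith

theorem fderiv_comp_pi_apply {ι E : Type*} [Fintype ι] [DecidableEq ι] [NormedAddCommGroup E]
    [NormedSpace ℝ E] {H : (ι → ℝ) → ℝ} {u : ι → E → ℝ} {x : E}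
    (hH : DifferentiableAt ℝ H fun j => u j x) (hu : ∀ j, DifferentiableAt ℝ (u j) x) (e : E) :
    fderiv ℝ (fun y => H fun j => u j y) x e
      = ∑ j, fderiv ℝ H (fun k => u k x) (Pi.single j 1) * fderiv ℝ (u j) x e := by
  have hcomp := hH.hasFDerivAt.comp x (hasFDerivAt_pi.2 fun j => (hu j).hasFDerivAt)
  rw [show (fun y => H fun j => u j y) = H ∘ fun y j => u j y from rfl, hcomp.fderiv,
    ContinuousLinearMap.comp_apply,
    pi_eq_sum_univ' (ContinuousLinearMap.pi (fun j => fderiv ℝ (u j) x) e)]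
  simp [mul_comm]

variable {n : ℕ} {Φ : ℝ → ℝ}

theorem RegularPair.derivQuotient_eq {u φ : 𝔼 n → ℝ} (h : RegularPair Φ u φ) (hΦ : IsElliptic Φ)
    {e : 𝔼 n} (hN : ∀ x, piconeDensity Φ u φ e x = 0) (x y : 𝔼 n) :
    derivQuotient u φ e x = derivQuotient u φ e y := by
  refine eq_of_eq_zero_or_fderiv_eq_zero
    ((h.contDiff_derivQuotient e).differentiable two_ne_zero) (fun z => ?_) x y
  rcases eq_or_ne (∇ u z) 0 with hu | hu
  · left
    simp [derivQuotient, fderiv_apply_eq_inner_gradient, hu]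
  · right
    by_contra hσ
    have hσ' : ∇ (derivQuotient u φ e) z ≠ 0 := by
      rwa [← norm_ne_zero_iff, norm_gradient, norm_ne_zero_iff]
    have hφ : φ z ≠ 0 := h.ne_zero z
    exact (mul_pos (by positivity) (hΦ.inner_amul_pos hu hσ')).ne' (hN z)

theorem RegularPair.gradient_eq_smul {u φ : 𝔼 n → ℝ} (h : RegularPair Φ u φ) (hΦ : IsElliptic Φ)
    (hN : ∀ e x, piconeDensity Φ u φ e x = 0) (x : 𝔼 n) :
    ∇ u x = φ x • (φ 0)⁻¹ • ∇ u 0 := by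
  refine ext_inner_right ℝ fun e => ?_
  rw [real_inner_smul_left, real_inner_smul_left, inner_gradient_left, inner_gradient_left,
    ← h.derivQuotient_mul, h.derivQuotient_eq hΦ (hN e) x 0, derivQuotient]
  ring

variable {ι : Type*} [Fintype ι] [DecidableEq ι] {H : ι → (ι → ℝ) → ℝ} {u φ : ι → 𝔼 n → ℝ}

/-- `u` is a `C³` solution of the system `-div (Φ'(|∇uᵢ|²)∇uᵢ) = Hᵢ(u)`. -/
structure IsSystemSolution (Φ : ℝ → ℝ) (H : ι → (ι → ℝ) → ℝ) (u : ι → 𝔼 n → ℝ) : Prop where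
  contDiff : ∀ i, ContDiff ℝ 3 (u i)
  neg_vdiv_flux : ∀ i x, -vdiv (flux Φ (u i)) x = H i fun j => u j x

/-- `φ` witnesses the stability of the solution `u`: it is a nowhere vanishing solution of the
linearized system with the signs prescribed by the coupling `∂ⱼHᵢ(u)`. -/
structure IsStabilityWitness (Φ : ℝ → ℝ) (H : ι → (ι → ℝ) → ℝ) (u φ : ι → 𝔼 n → ℝ) : Prop where
  contDiff : ∀ i, ContDiff ℝ 2 (φ i)
  ne_zero : ∀ i x, φ i x ≠ 0
  coupling_pos : ∀ i j x, 0 < fderiv ℝ (H i) (fun k => u k x) (Pi.single j 1) * φ i x * φ j x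
  neg_vdiv_linFlux : ∀ i x, -vdiv (linFlux Φ (u i) (φ i)) x
    = ∑ j, fderiv ℝ (H i) (fun k => u k x) (Pi.single j 1) * φ j x

-- Where `linFlux` is not differentiable, its formal divergence is `0`, against the sign condition.
theorem IsStabilityWitness.differentiable_linFlux (h : IsStabilityWitness Φ H u φ) (i : ι) :
    Differentiable ℝ (linFlux Φ (u i) (φ i)) := by
  intro x
  by_contra hnd
  have hzero := h.neg_vdiv_linFlux i x
  rw [vdiv_eq_zero_of_fderiv_eq_zero (fderiv_zero_of_not_differentiableAt hnd), neg_zero] at hzero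
  have hpos := Finset.sum_pos (fun j _ => h.coupling_pos i j x) ⟨i, Finset.mem_univ i⟩
  simp only [mul_right_comm _ (φ i x)] at hpos
  rw [← Finset.sum_mul, ← hzero, zero_mul] at hpos
  exact hpos.false

theorem IsStabilityWitness.regularPair (h : IsStabilityWitness Φ H u φ)
    (hu : IsSystemSolution Φ H u) (hH : ∀ i, ContDiff ℝ 1 (H i)) (i : ι) :
    RegularPair Φ (u i) (φ i) := by
  have hU : ContDiff ℝ 1 fun x j => u j x :=
    contDiff_pi.2 fun j => (hu.contDiff j).of_le (by norm_num)
  have hdiv : vdiv (flux Φ (u i)) = fun x => -H i fun j => u j x :=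
    funext fun x => by rw [← hu.neg_vdiv_flux, neg_neg]
  have hlindiv : vdiv (linFlux Φ (u i) (φ i))
      = fun x => -∑ j, fderiv ℝ (H i) (fun k => u k x) (Pi.single j 1) * φ j x :=
    funext fun x => by rw [← h.neg_vdiv_linFlux, neg_neg]
  have hdH : Continuous fun x => fderiv ℝ (H i) fun k => u k x :=
    ((hH i).continuous_fderiv one_ne_zero).comp hU.continuous
  refine ⟨hu.contDiff i, hdiv ▸ ((hH i).comp hU).neg, h.contDiff i, h.ne_zero i,
    h.differentiable_linFlux i, hlindiv ▸ ?_⟩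
  exact (continuous_finsetSum _ fun j _ =>
    (hdH.clm_apply continuous_const).mul (h.contDiff j).continuous).neg

theorem IsStabilityWitness.piconeDefect_eq (h : IsStabilityWitness Φ H u φ)
    (hu : IsSystemSolution Φ H u) (hH : ∀ i, ContDiff ℝ 1 (H i)) (i : ι) (e x : 𝔼 n) :
    piconeDefect Φ (u i) (φ i) e x
      = ∑ j, fderiv ℝ (H i) (fun k => u k x) (Pi.single j 1) * φ i x * φ j x
          * (derivQuotient (u i) (φ i) e x * derivQuotient (u j) (φ j) e x
            - derivQuotient (u i) (φ i) e x ^ 2) := by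
  have hlin := neg_eq_iff_eq_neg.1 (h.neg_vdiv_linFlux i x)
  have hdiv : vdiv (flux Φ (u i)) = fun x => -H i fun j => u j x :=
    funext fun x => by rw [← hu.neg_vdiv_flux, neg_neg]
  have hddiv : fderiv ℝ (vdiv (flux Φ (u i))) x e
      = -∑ j, fderiv ℝ (H i) (fun k => u k x) (Pi.single j 1) * fderiv ℝ (u j) x e := by
    rw [hdiv, fderiv_fun_neg, neg_apply, fderiv_comp_pi_apply
      ((hH i).differentiable one_ne_zero _) fun j => (hu.contDiff j).differentiable (by norm_num) x]
  have hw : ∀ j, fderiv ℝ (u j) x e = derivQuotient (u j) (φ j) e x * φ j x := fun j =>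
    (h.regularPair hu hH j).derivQuotient_mul.symm
  rw [piconeDefect, hlin, hddiv, mul_neg, mul_neg, sub_neg_eq_add, Finset.mul_sum, Finset.mul_sum,
    ← Finset.sum_neg_distrib, ← Finset.sum_add_distrib, Finset.mul_sum]
  refine Finset.sum_congr rfl fun j _ => ?_
  rw [hw i, hw j]
  ring

theorem IsStabilityWitness.sum_piconeDefect_nonpos (h : IsStabilityWitness Φ H u φ)
    (hu : IsSystemSolution Φ H u) (hH : ∀ i, ContDiff ℝ 1 (H i))
    (hsymm : ∀ i j x, fderiv ℝ (H i) (fun k => u k x) (Pi.single j 1)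
      = fderiv ℝ (H j) (fun k => u k x) (Pi.single i 1)) (e x : 𝔼 n) :
    ∑ i, piconeDefect Φ (u i) (φ i) e x ≤ 0 := by
  simp only [h.piconeDefect_eq hu hH]
  refine sum_mul_mul_sub_sq_nonpos _ (fun i j => ?_) fun i j => (h.coupling_pos i j x).le
  rw [hsymm i j x]
  ring

end Stable

theorem liouville_dimension_le_four_general {ι : Type*} [Fintype ι] [DecidableEq ι] {n : ℕ}
    (hn : n ≤ 4) {Φ : ℝ → ℝ} (hΦ : IsElliptic Φ) (hΦn : LocallyDominated n Φ)
    {H : ι → (ι → ℝ) → ℝ} (hH : ∀ i, ContDiff ℝ 1 (H i)) {u φ : ι → 𝔼 n → ℝ}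
    (hu : IsSystemSolution Φ H u) (hφ : IsStabilityWitness Φ H u φ)
    (hnonneg : ∀ i x, 0 ≤ H i fun j => u j x)
    (hsymm : ∀ i j x, fderiv ℝ (H i) (fun k => u k x) (Pi.single j 1)
      = fderiv ℝ (H j) (fun k => u k x) (Pi.single i 1))
    (hbdd : ∀ i, ∃ M, ∀ x, |u i x| ≤ M) (hgrad : ∀ i, ∃ G, ∀ x, ‖∇ (u i) x‖ ≤ G)
    (i : ι) (x y : 𝔼 n) : u i x = u i y := by
  have hpair : ∀ i, RegularPair Φ (u i) (φ i) := hφ.regularPair hu hH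
  have hsuper : ∀ i, IsBoundedSupersolution Φ (u i) := fun i =>
    ⟨(hu.contDiff i).of_le (by norm_num), hbdd i, hgrad i,
      fun x => neg_nonneg.1 (hu.neg_vdiv_flux i x ▸ hnonneg i x)⟩
  have hdensity : ∀ e x, piconeDensity Φ (u i) (φ i) e x = 0 := fun e =>
    piconeDensity_eq_zero hn hΦ hΦn hpair hsuper e
      (hφ.sum_piconeDefect_nonpos hu hH hsymm e) i
  have hdir : ∀ x, ∇ (u i) x = φ i x • (φ i 0)⁻¹ • ∇ (u i) 0 :=
    (hpair i).gradient_eq_smul hΦ hdensity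
  have hzero : (φ i 0)⁻¹ • ∇ (u i) 0 = 0 := (hsuper i).eq_zero_of_gradient_eq_smul hΦ
    ((hφ.contDiff i).of_le one_le_two) (hφ.ne_zero i) hdir
  refine is_const_of_fderiv_eq_zero ((hu.contDiff i).differentiable (by norm_num)) (fun z => ?_) x y
  rw [← norm_eq_zero, ← norm_gradient, hdir, hzero, smul_zero, norm_zero]

/-- **Liouville theorem in dimensions `n ≤ 4`**: a bounded stable solution of the
symmetric quasilinear system `-div(Φ'(|∇uᵢ|²)∇uᵢ) = Hᵢ(u)` with nonnegative
nonlinearities `Hᵢ ≥ 0`, `Φ` satisfying Condition (A) or (B), and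
`|∇uᵢ| ∈ L^∞ ∩ W^{1,2}_loc`, must be constant when `1 ≤ n ≤ 4`. -/
theorem liouville_dimension_le_four
    (n m : ℕ) (hn1 : 1 ≤ n) (hn4 : n ≤ 4) (hm : 1 ≤ m)
    (Φ : ℝ → ℝ) (hΦ : ContDiff ℝ 2 Φ) (hΦ0 : Φ 0 = 0)
    (hΦpos : ∀ s : ℝ, 0 < s → 0 < Φ s)
    (hΦ'pos : ∀ s : ℝ, 0 < s → 0 < deriv Φ s)
    (hΦell : ∀ s : ℝ, 0 < s → 0 < deriv Φ s + 2 * s * deriv (deriv Φ) s)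
    (hAB : ConditionA n Φ ∨ ConditionB n Φ)
    (H : Fin m → (Fin m → ℝ) → ℝ) (hH : ∀ i, ContDiff ℝ 1 (H i))
    (hHnonneg : ∀ (i : Fin m) (y : Fin m → ℝ), 0 ≤ H i y)
    -- the system is symmetric
    (hsym : ∀ (i j : Fin m) (y : Fin m → ℝ),
      fderiv ℝ (H i) y (Pi.single j 1) = fderiv ℝ (H j) y (Pi.single i 1))
    (u : Fin m → EuclideanSpace ℝ (Fin n) → ℝ)
    (hu : ∀ i, ContDiff ℝ 3 (u i))
    (hsol : ∀ i x, -vdiv (fun y => deriv Φ (‖gradient (u i) y‖ ^ 2) • gradient (u i) y) x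
        = H i (fun j => u j x))
    (hcoupling : ∀ (i j : Fin m) (x : EuclideanSpace ℝ (Fin n)),
      0 < fderiv ℝ (H i) (fun k => u k x) (Pi.single j 1)
        * fderiv ℝ (H j) (fun k => u k x) (Pi.single i 1))
    -- `u` is bounded
    (hubdd : ∃ C : ℝ, ∀ i x, |u i x| ≤ C)
    -- |∇uᵢ| ∈ L^∞
    (hgradbdd : ∃ C : ℝ, ∀ i x, ‖gradient (u i) x‖ ≤ C)
    -- |∇uᵢ| ∈ W^{1,2}_loc
    (hW12loc : ∀ i, ∀ K : Set (EuclideanSpace ℝ (Fin n)), IsCompact K →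
      IntegrableOn (fun x =>
        ‖gradient (fun y => ‖gradient (u i) y‖) x‖ ^ 2) K volume)
    -- stability: there is a sign-coherent solution of the linearized system
    (hstable : ∃ φ : Fin m → EuclideanSpace ℝ (Fin n) → ℝ,
      (∀ i, ContDiff ℝ 2 (φ i)) ∧ (∀ i x, φ i x ≠ 0) ∧
      (∀ (i j : Fin m) (x : EuclideanSpace ℝ (Fin n)),
        0 < fderiv ℝ (H i) (fun k => u k x) (Pi.single j 1) * φ i x * φ j x) ∧
      (∀ i x, -vdiv (fun y => Amul Φ (gradient (u i) y) (gradient (φ i) y)) x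
        = ∑ j, fderiv ℝ (H i) (fun k => u k x) (Pi.single j 1) * φ j x)) :
    ∀ i, ∀ x y, u i x = u i y := by
  obtain ⟨φ, hφ, hφ0, hpos, hlin⟩ := hstable
  exact liouville_dimension_le_four_general hn4 ⟨hΦ, hΦ'pos, hΦell⟩
    (hAB.elim ConditionA.locallyDominated ConditionB.locallyDominated) hH ⟨hu, hsol⟩
    ⟨hφ, hφ0, hpos, hlin⟩ (fun i x => hHnonneg i _) (fun i j x => hsym i j _)
    (fun i => hubdd.imp fun _ h => h i) (fun i => hgradbdd.imp fun _ h => h i)
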